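/- arXiv:2603.27379 — 2 statements merged into one kernel-verified Lean document; each statement's English description precedes it below -/
import Mathlib

section
/- Let d ≥ 2, let m ≥ 1 be an integer, let s ≥ 1, and let θ_1,…,θ_s ∈ 𝕋^d be distinct points with Δ(ϑ) ≥ β/m for some β ≥ π d^{3/2}/log 2. Then the real symmetric s×s kernel matrix K_ϑ := [D_m(θ_j − θ_k)]_{j,k=1}^s (well-defined since D_m is ℤ^d-periodic) satisfies 1 − d^{3/2}/β ≤ λ_min(K_ϑ) ≤ λ_max(K_ϑ) ≤ 1 + d^{3/2}/β, where λ_min and λ_max denote the smallest and largest eigenvalues. -/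
noncomputable section

open Real

/-- The normalized one-dimensional Dirichlet kernel
`d_m(t) = (2m+1)⁻¹ ∑_{k=-m}^{m} e^{2πikt}`, written via its (equal) real form. -/
def dirKer (m : ℕ) (t : ℝ) : ℝ :=
  (2 * m + 1 : ℝ)⁻¹ * ∑ k ∈ Finset.Icc (-(m : ℤ)) (m : ℤ), Real.cos (2 * Real.pi * k * t)

/-- The square (tensor-product) Dirichlet kernel `D_m(ξ) = ∏ i d_m(ξ i)` on `ℝ^d`;
it is `ℤ^d`-periodic, hence well-defined on the torus `𝕋^d`. -/
def sqDirKer (d m : ℕ) (ξ : EuclideanSpace ℝ (Fin d)) : ℝ :=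
  ∏ i, dirKer m (ξ i)

/-- The (Euclidean quotient) torus distance on `𝕋^d = ℝ^d/ℤ^d`, in terms of
representatives: `|x - y| = min_{n ∈ ℤ^d} |x - y + n|`. -/
def torusDist {d : ℕ} (x y : EuclideanSpace ℝ (Fin d)) : ℝ :=
  ⨅ n : Fin d → ℤ, ‖x - y + ∑ i, ((n i : ℝ)) • EuclideanSpace.single i (1 : ℝ)‖


lemma parseval_sin (z : ℝ) (hz : ∀ n : ℤ, z ≠ n) :
    HasSum (fun n : ℤ => sin (π * z) ^ 2 / π ^ 2 * (1 / (z - n) ^ 2)) 1 := by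
  have h := hasSum_sq_fourierCoeffOn (a := 0) (b := 1)
    (f := fun t : ℝ => Complex.exp (((2 * π * z * t : ℝ) : ℂ) * Complex.I)) zero_lt_one (by
      apply MeasureTheory.MemLp.of_bound (C := 1)
      · apply Continuous.aestronglyMeasurable; fun_prop
      · exact Filter.Eventually.of_forall fun t => by
          simp only [Complex.norm_exp_ofReal_mul_I]; exact le_refl _)
  simp only [Complex.norm_exp_ofReal_mul_I] at h
  simp only [sub_zero, inv_one, one_pow, intervalIntegral.integral_const, smul_eq_mul, mul_one] at h
  convert h using 1
  funext n
  rw [fourierCoeffOn_eq_integral]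
  have hne : z - n ≠ 0 := sub_ne_zero.mpr (hz n)
  have hpi := Real.pi_ne_zero
  set c : ℂ := ((2 * π * (z - n) : ℝ) : ℂ) * Complex.I with hc
  have hc0 : c ≠ 0 := by
    rw [hc]
    refine mul_ne_zero ?_ Complex.I_ne_zero
    norm_cast
    positivity
  have hintg : ∫ x in (0:ℝ)..1, (fourier (-n)) (x : AddCircle ((1:ℝ) - 0)) • Complex.exp (((2 * π * z * x : ℝ) : ℂ) * Complex.I)
      = ∫ x in (0:ℝ)..1, Complex.exp (c * x) := by
    congr 1; funext x
    rw [fourier_coe_apply, smul_eq_mul, ← Complex.exp_add, hc]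
    congr 1
    push_cast
    ring
  rw [hintg, integral_exp_mul_complex hc0]
  have h1 : Complex.exp (c * (1:ℝ)) = Complex.exp (((2 * (π * z) : ℝ) : ℂ) * Complex.I) := by
    rw [hc, Complex.exp_eq_exp_iff_exists_int]
    exact ⟨-n, by push_cast; ring⟩
  rw [h1]
  have h2 : ‖Complex.exp (((2 * (π * z) : ℝ) : ℂ) * Complex.I) - Complex.exp (c * (0:ℝ))‖ ^ 2
      = 4 * sin (π * z) ^ 2 := by
    rw [← Complex.normSq_eq_norm_sq, Complex.normSq_apply]
    simp only [Complex.sub_re, Complex.sub_im, Complex.exp_ofReal_mul_I_re, Complex.exp_ofReal_mul_I_im]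
    simp
    rw [cos_two_mul, sin_two_mul]
    have := sin_sq_add_cos_sq (π * z)
    have h3 : cos (π * z) ^ 2 = 1 - sin (π * z) ^ 2 := by linarith
    linear_combination (4 * cos (π*z)^2 -4)* this
  have h5 : ‖(Complex.exp (((2 * (π * z) : ℝ) : ℂ) * Complex.I) - Complex.exp (c * (0:ℝ))) / c‖ ^ 2
      = 4 * sin (π * z) ^ 2 / ‖c‖ ^ 2 := by
    rw [norm_div, div_pow, h2]
  rw [norm_smul, mul_pow, h5]
  have h4 : ‖c‖ ^ 2 = 4 * π ^ 2 * (z - n) ^ 2 := by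
    rw [hc, norm_mul, Complex.norm_I, Complex.norm_real, mul_one, Real.norm_eq_abs, sq_abs]; ring
  rw [h4]
  simp
  field_simp

def Hp (L : ℕ) (z : ℝ) : ℝ :=
  ∑ n ∈ Finset.range (L + 1), sinc (π * (z - n)) ^ 2 + z * sinc (π * z) ^ 2
    - (z - L) * sinc (π * (z - L)) ^ 2

def Hd (L : ℕ) (z : ℝ) : ℝ := sinc (π * z) ^ 2 + sinc (π * (z - L)) ^ 2

lemma sinc_shift (z : ℝ) (hz : ∀ n : ℤ, z ≠ n) (n : ℕ) :
    sinc (π * (z - n)) ^ 2 = sin (π * z) ^ 2 / π ^ 2 * (1 / (z - n) ^ 2) := by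
  have hne : z - n ≠ 0 := sub_ne_zero.mpr (by exact_mod_cast hz n)
  rw [sinc_of_ne_zero (mul_ne_zero pi_ne_zero hne), mul_sub, mul_comm π (n:ℝ), sin_sub_nat_mul_pi]
  have : ((-1:ℝ) ^ n) ^ 2 = 1 := by rw [← pow_mul, mul_comm, pow_mul]; simp
  rw [div_pow, mul_pow, this]
  have : π * z - n * π = π * (z - n) := by ring
  rw [this]
  field_simp

lemma sinc_int (k : ℤ) (n : ℕ) : sinc (π * ((k:ℝ) - n)) = if k = n then 1 else 0 := by
  split_ifs with h
  · subst h; simp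
  · have : (k:ℝ) - n ≠ 0 := sub_ne_zero.mpr (by exact_mod_cast h)
    rw [sinc_of_ne_zero (mul_ne_zero pi_ne_zero this)]
    have : π * ((k:ℝ) - n) = ((k - n : ℤ) : ℝ) * π := by push_cast; ring
    rw [this, sin_int_mul_pi, zero_div]

lemma Hp_int (L : ℕ) (k : ℤ) : Hp L k = if 0 ≤ k ∧ k ≤ L then 1 else 0 := by
  unfold Hp
  have h0 := sinc_int k 0
  simp only [Nat.cast_zero, sub_zero] at h0
  rw [h0, sinc_int k L]
  simp_rw [sinc_int]
  have e1 : (k:ℝ) * (if k = 0 then (1:ℝ) else 0) ^ 2 = 0 := by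
    split_ifs with h
    · simp [h]
    · simp
  have e2 : ((k:ℝ) - L) * (if k = (L:ℤ) then (1:ℝ) else 0) ^ 2 = 0 := by
    split_ifs with h
    · simp [h]
    · simp
  have e1' : (k:ℝ) * (if k = ((0:ℕ):ℤ) then (1:ℝ) else 0) ^ 2 = 0 := by exact_mod_cast e1
  rw [e2]
  simp only [Nat.cast_zero] at e1' ⊢
  rw [e1']
  by_cases h : 0 ≤ k ∧ k ≤ L
  · rw [if_pos h]
    obtain ⟨q, rfl⟩ := Int.eq_ofNat_of_zero_le h.1
    have hq : q ∈ Finset.range (L + 1) := by simp; omega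
    rw [Finset.sum_eq_single_of_mem q hq]
    · simp
    · intro b _ hb
      have : ¬ ((q:ℤ) = b) := by omega
      simp [this]
  · rw [if_neg h, Finset.sum_eq_zero]
    · simp
    · intro n hn
      have : ¬ (k = n) := by simp at hn; omega
      simp [this]

lemma Hp_nonint (L : ℕ) (z : ℝ) (hz : ∀ n : ℤ, z ≠ n) :
    Hp L z = sin (π * z) ^ 2 / π ^ 2 *
      (∑ n ∈ Finset.range (L + 1), 1 / (z - n) ^ 2 + 1 / z - 1 / (z - L)) := by
  unfold Hp
  have h0 := sinc_shift z hz 0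
  simp only [Nat.cast_zero, sub_zero] at h0
  rw [h0, sinc_shift z hz L]
  simp_rw [sinc_shift z hz]
  rw [← Finset.mul_sum]
  have hne : z - L ≠ 0 := sub_ne_zero.mpr (by exact_mod_cast hz L)
  have hz0 : z ≠ 0 := by exact_mod_cast hz 0
  field_simp

lemma Hd_nonint (L : ℕ) (z : ℝ) (hz : ∀ n : ℤ, z ≠ n) :
    Hd L z = sin (π * z) ^ 2 / π ^ 2 * (1 / z ^ 2 + 1 / (z - L) ^ 2) := by
  unfold Hd
  have h0 := sinc_shift z hz 0
  simp only [Nat.cast_zero, sub_zero] at h0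
  rw [h0, sinc_shift z hz L]
  ring

/-- telescoping, lower -/
lemma tel_lower (z : ℝ) (hz : 0 < z) (R : ℕ) :
    1 / z - 1 / (z + R) ≤ ∑ n ∈ Finset.range R, 1 / (z + n) ^ 2 := by
  induction R with
  | zero => simp
  | succ R ih =>
    rw [Finset.sum_range_succ]
    have : 1 / (z + R) - 1 / (z + (R + 1 : ℕ)) ≤ 1 / (z + R) ^ 2 := by
      push_cast
      have h1 : 0 < z + R := by positivity
      rw [div_sub_div _ _ h1.ne' (by positivity), div_le_div_iff₀ (by positivity) (by positivity)]
      nlinarith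
    linarith

lemma tel_upper (z : ℝ) (hz : 0 < z) (R : ℕ) :
    ∑ n ∈ Finset.range R, 1 / (z + n + 1) ^ 2 ≤ 1 / z - 1 / (z + R) := by
  induction R with
  | zero => simp
  | succ R ih =>
    rw [Finset.sum_range_succ]
    have : 1 / (z + R + 1) ^ 2 ≤ 1 / (z + R) - 1 / (z + (R + 1 : ℕ)) := by
      push_cast
      have h1 : 0 < z + R := by positivity
      rw [div_sub_div _ _ h1.ne' (by positivity), div_le_div_iff₀ (by positivity) (by positivity)]
      nlinarith
    linarith

lemma tsum_upper (z : ℝ) (hz : 0 < z) :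
    Summable (fun n : ℕ => 1 / (z + n + 1) ^ 2) ∧ ∑' n : ℕ, 1 / (z + n + 1) ^ 2 ≤ 1 / z := by
  have hb : ∀ R : ℕ, ∑ n ∈ Finset.range R, 1 / (z + n + 1) ^ 2 ≤ 1 / z := fun R =>
    (tel_upper z hz R).trans (by have : 0 ≤ 1 / (z + R) := by positivity
                                 linarith)
  refine ⟨summable_of_sum_range_le (fun n => by positivity) hb,
    Real.tsum_le_of_sum_range_le (fun n => by positivity) hb⟩

lemma tsum_lower (z : ℝ) (hz : 0 < z) :
    1 / z ≤ 1 / z ^ 2 + ∑' n : ℕ, 1 / (z + n + 1) ^ 2 := by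
  have hs : Summable (fun n : ℕ => 1 / (z + n) ^ 2) := by
    rw [← summable_nat_add_iff 1]
    refine (tsum_upper z hz).1.congr fun n => ?_
    push_cast; rw [add_assoc]
  have h1 := hs.tsum_eq_zero_add
  have h2 : ∑' n : ℕ, 1 / (z + (n + 1 : ℕ)) ^ 2 = ∑' n : ℕ, 1 / (z + n + 1) ^ 2 := by
    congr 1; funext n; push_cast; ring_nf
  rw [h2] at h1
  simp only [Nat.cast_zero, add_zero] at h1
  rw [← h1]
  have ht := hs.hasSum.tendsto_sum_nat
  have h3 : Filter.Tendsto (fun R : ℕ => 1 / z - 1 / (z + R)) Filter.atTop (nhds (1 / z - 0)) := by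
    refine Filter.Tendsto.sub tendsto_const_nhds ?_
    refine Filter.Tendsto.div_atTop tendsto_const_nhds ?_
    exact Filter.tendsto_atTop_add_const_left _ _ tendsto_natCast_atTop_atTop
  rw [sub_zero] at h3
  exact le_of_tendsto_of_tendsto' h3 ht (tel_lower z hz)

lemma inside_eq (L : ℕ) (z : ℝ) (hz : ∀ n : ℤ, z ≠ n) :
    sin (π * z) ^ 2 / π ^ 2 * (∑ n ∈ Finset.range (L + 1), 1 / (z - n) ^ 2
      + ∑' n : ℕ, 1 / ((L - z) + n + 1) ^ 2 + ∑' n : ℕ, 1 / (z + n + 1) ^ 2) = 1 := by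
  have h := parseval_sin z hz
  have hs0 : sin (π * z) ^ 2 / π ^ 2 ≠ 0 := by
    intro h0
    rw [h0] at h
    have h' := h.tsum_eq
    simp only [zero_mul, tsum_zero] at h'
    exact zero_ne_one h'
  have hs : Summable (fun n : ℤ => 1 / (z - n) ^ 2) := (summable_mul_left_iff hs0).mp h.summable
  have ht := h.tsum_eq
  rw [tsum_mul_left] at ht
  have hs1 : Summable (fun n : ℕ => 1 / (z - (n : ℤ)) ^ 2) :=
    hs.comp_injective (i := fun n : ℕ => (n : ℤ)) Nat.cast_injective
  have hs2 : Summable (fun n : ℕ => 1 / (z - (-((n : ℤ) + 1) : ℤ)) ^ 2) :=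
    hs.comp_injective (i := fun n : ℕ => -((n : ℤ) + 1)) (fun a b hab => by
      have : -((a : ℤ) + 1) = -((b : ℤ) + 1) := hab
      omega)
  rw [tsum_of_nat_of_neg_add_one (f := fun n : ℤ => 1 / (z - n) ^ 2) hs1 hs2, ← hs1.sum_add_tsum_nat_add (L + 1)] at ht
  have e1 : ∀ n : ℕ, 1 / (z - ((n + (L + 1) : ℕ) : ℤ)) ^ 2 = 1 / ((L - z) + n + 1) ^ 2 := by
    intro n
    push_cast
    rw [show z - (n + (L + 1)) = -(L - z + n + 1) by ring, neg_sq]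
  have e2 : ∀ n : ℕ, 1 / (z - (-((n : ℤ) + 1) : ℤ)) ^ 2 = 1 / (z + n + 1) ^ 2 := by
    intro n
    push_cast
    rw [show z - (-(n + 1) : ℝ) = (z + n + 1) by ring]
  have f1 := tsum_congr (L := SummationFilter.unconditional ℕ) e1
  have f2 := tsum_congr (L := SummationFilter.unconditional ℕ) e2
  rw [← f1, ← f2]
  have f3 : ∑ n ∈ Finset.range (L + 1), 1 / (z - (n:ℝ)) ^ 2
    = ∑ n ∈ Finset.range (L + 1), 1 / (z - ((n:ℤ):ℝ)) ^ 2 := by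
    simp only [Int.cast_natCast]
  rw [f3]
  exact ht

lemma Hp_ge_one (L : ℕ) (z : ℝ) (h0 : 0 < z) (hL : z < L) : 1 ≤ Hp L z := by
  by_cases hz : ∀ n : ℤ, z ≠ n
  · refine (inside_eq L z hz).symm.le.trans ?_
    rw [Hp_nonint L z hz]
    gcongr
    have h1 := (tsum_upper z h0).2
    have h2 := (tsum_upper (L - z) (by linarith)).2
    have : 1 / (z - L) = - (1 / (L - z)) := by rw [← neg_sub, div_neg]
    linarith
  · push Not at hz
    obtain ⟨n, rfl⟩ := hz
    rw [Hp_int, if_pos]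
    constructor
    · exact_mod_cast h0.le
    · exact_mod_cast hL.le

lemma Hd_nonneg (L : ℕ) (z : ℝ) : 0 ≤ Hd L z := by unfold Hd; positivity

lemma Hm_le_one (L : ℕ) (z : ℝ) (h0 : 0 < z) (hL : z < L) : Hp L z - Hd L z ≤ 1 := by
  by_cases hz : ∀ n : ℤ, z ≠ n
  · refine le_trans ?_ (inside_eq L z hz).le
    rw [Hp_nonint L z hz, Hd_nonint L z hz, ← mul_sub]
    gcongr
    have h1 := tsum_lower z h0
    have h2 := tsum_lower (L - z) (by linarith)
    have : 1 / (z - L) = - (1 / (L - z)) := by rw [← neg_sub, div_neg]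
    have h3 : 1 / (z - L) ^ 2 = 1 / (L - z) ^ 2 := by rw [← neg_sub, neg_sq]
    linarith
  · push Not at hz
    obtain ⟨n, rfl⟩ := hz
    have := Hd_nonneg L n
    have h : Hp L n ≤ 1 := by rw [Hp_int]; split_ifs <;> norm_num
    linarith

lemma Hp_symm (L : ℕ) (z : ℝ) : Hp L (L - z) = Hp L z := by
  unfold Hp
  rw [← Finset.sum_range_reflect]
  have : ∀ x : ℝ, sinc (π * -x) = sinc (π * x) := fun x => by rw [mul_neg, sinc_neg]
  have e1 : (L:ℝ) - z - L = -z := by ring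
  have e2 : (L:ℝ) - z = -(z - L) := by ring
  rw [e1, this, e2, this]
  have e3 : ∀ n ∈ Finset.range (L + 1), sinc (π * (-(z - L) - (L + 1 - 1 - n : ℕ))) ^ 2
      = sinc (π * (z - n)) ^ 2 := by
    intro n hn
    rw [Finset.mem_range] at hn
    rw [← this]
    congr 3
    rw [show L + 1 - 1 - n = L - n by omega, Nat.cast_sub (by omega)]
    ring
  rw [Finset.sum_congr rfl e3]
  ring

lemma Hd_symm (L : ℕ) (z : ℝ) : Hd L (L - z) = Hd L z := by
  unfold Hd
  have : ∀ x : ℝ, sinc (π * -x) = sinc (π * x) := fun x => by rw [mul_neg, sinc_neg]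
  have e1 : (L:ℝ) - z - L = -z := by ring
  have e2 : (L:ℝ) - z = -(z - L) := by ring
  rw [e1, this, e2, this, add_comm]

lemma Hp_outside (L : ℕ) (z : ℝ) (hL : L < z) : 0 ≤ Hp L z ∧ Hp L z - Hd L z ≤ 0 := by
  have hL0 : (0:ℝ) ≤ L := by positivity
  by_cases hz : ∀ n : ℤ, z ≠ n
  · rw [Hp_nonint L z hz, Hd_nonint L z hz, ← mul_sub]
    have hw : 0 < z - L := by linarith
    have e3 : ∑ n ∈ Finset.range (L + 1), 1 / (z - n) ^ 2
        = ∑ n ∈ Finset.range (L + 1), 1 / ((z - L) + n) ^ 2 := by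
      rw [← Finset.sum_range_reflect]
      refine Finset.sum_congr rfl fun n hn => ?_
      rw [Finset.mem_range] at hn
      rw [show L + 1 - 1 - n = L - n by omega, Nat.cast_sub (by omega)]
      congr 2
      ring
    constructor
    · apply mul_nonneg (by positivity)
      have := tel_lower (z - L) hw (L + 1)
      rw [← e3] at this
      push_cast at this
      have h2 : 1 / (z - L + (L + 1)) ≤ 1 / z := by
        apply one_div_le_one_div_of_le <;> linarith
      linarith
    · apply mul_nonpos_of_nonneg_of_nonpos (by positivity)
      rw [e3, Finset.sum_range_succ', Nat.cast_zero, add_zero]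
      have h4 : ∑ k ∈ Finset.range L, 1 / (z - L + (k + 1 : ℕ)) ^ 2
        = ∑ n ∈ Finset.range L, 1 / ((z - L) + n + 1) ^ 2 := by
        refine Finset.sum_congr rfl fun n _ => ?_
        push_cast; ring_nf
      rw [h4]
      have := tel_upper (z - L) hw L
      rw [sub_add_cancel] at this
      have : 0 ≤ 1 / z ^ 2 := by positivity
      linarith
  · push Not at hz
    obtain ⟨n, rfl⟩ := hz
    have := Hd_nonneg L n
    have h : Hp L n = 0 := by
      rw [Hp_int, if_neg]
      rintro ⟨_, h⟩
      have : (n:ℝ) ≤ L := by exact_mod_cast h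
      linarith
    constructor <;> linarith

lemma Hp_outside' (L : ℕ) (z : ℝ) (hL : z < 0) : 0 ≤ Hp L z ∧ Hp L z - Hd L z ≤ 0 := by
  rw [← Hp_symm, ← Hd_symm]
  exact Hp_outside L _ (by linarith)

/-- compactly supported even extension -/
def ext0 (Φ : ℝ → ℝ) (δ : ℝ) (t : ℝ) : ℝ := δ⁻¹ * Φ (min (|t| / δ) 1)

lemma ext0_zero_of (Φ : ℝ → ℝ) (h1 : Φ 1 = 0) (δ : ℝ) (hδ : 0 < δ) (t : ℝ) (ht : δ ≤ |t|) :
    ext0 Φ δ t = 0 := by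
  unfold ext0
  rw [min_eq_right ((one_le_div hδ).mpr ht), h1, mul_zero]

lemma ext0_cont (Φ : ℝ → ℝ) (hΦ : Continuous Φ) (δ : ℝ) : Continuous (ext0 Φ δ) := by
  unfold ext0; fun_prop

lemma ext0_hcs (Φ : ℝ → ℝ) (h1 : Φ 1 = 0) (δ : ℝ) (hδ : 0 < δ) : HasCompactSupport (ext0 Φ δ) := by
  apply HasCompactSupport.intro (isCompact_Icc (a := -δ) (b := δ))
  intro x hx
  apply ext0_zero_of Φ h1 δ hδ
  by_contra h
  push Not at h
  exact hx ⟨(abs_lt.mp h).1.le, (abs_lt.mp h).2.le⟩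

open FourierTransform in
lemma fourier_ext0 (Φ : ℝ → ℝ) (hΦ : Continuous Φ) (h1 : Φ 1 = 0) (δ : ℝ) (hδ : 0 < δ) (y : ℝ) :
    𝓕 (fun t : ℝ => (ext0 Φ δ t : ℂ)) y
      = ((2 * ∫ u in (0:ℝ)..1, Φ u * cos (2 * π * (δ * y) * u) : ℝ) : ℂ) := by
  rw [Real.fourier_real_eq_integral_exp_smul]
  set f : ℝ → ℝ := ext0 Φ δ with hf
  have hfc : Continuous f := ext0_cont Φ hΦ δ
  have hfs : HasCompactSupport f := ext0_hcs Φ h1 δ hδ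
  have heven : ∀ t, f (-t) = f t := fun t => by simp [hf, ext0]
  have hsplit : ∀ v : ℝ, Complex.exp (↑(-2 * π * v * y) * Complex.I) • (f v : ℂ)
      = ((f v * cos (2 * π * y * v) : ℝ) : ℂ) + ((f v * sin (2 * π * y * v) : ℝ) : ℂ) * (-Complex.I) := by
    intro v
    rw [Complex.exp_mul_I, ← Complex.ofReal_cos, ← Complex.ofReal_sin,
      show -2 * π * v * y = -(2 * π * y * v) by ring, cos_neg, sin_neg, smul_eq_mul]
    push_cast; ring
  simp_rw [hsplit]
  have hi1 : MeasureTheory.Integrable (fun v => f v * cos (2 * π * y * v)) :=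
    Continuous.integrable_of_hasCompactSupport (by fun_prop) hfs.mul_right
  have hi2 : MeasureTheory.Integrable (fun v => f v * sin (2 * π * y * v)) :=
    Continuous.integrable_of_hasCompactSupport (by fun_prop) hfs.mul_right
  rw [MeasureTheory.integral_add hi1.ofReal (hi2.ofReal.mul_const _),
    MeasureTheory.integral_mul_const, integral_complex_ofReal, integral_complex_ofReal]
  have hodd : ∫ v, f v * sin (2 * π * y * v) = 0 := by
    have h := MeasureTheory.integral_neg_eq_self (fun v => f v * sin (2 * π * y * v)) MeasureTheory.volume
    simp only [heven, mul_neg, sin_neg] at h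
    rw [MeasureTheory.integral_neg] at h
    linarith
  rw [hodd]
  have habs : ∀ v, f v * cos (2 * π * y * v) = (fun v => f v * cos (2 * π * y * v)) |v| := by
    intro v
    rcases abs_cases v with ⟨h, _⟩ | ⟨h, _⟩ <;> simp only [h, heven, mul_neg, cos_neg]
  have heq : ∫ v, f v * cos (2 * π * y * v) = 2 * ∫ v in Set.Ioi (0:ℝ), f v * cos (2 * π * y * v) := by
    rw [← integral_comp_abs (f := fun v => f v * cos (2 * π * y * v))]
    exact MeasureTheory.integral_congr_ae (Filter.Eventually.of_forall habs)
  have hIoi : ∫ v in Set.Ioi (0:ℝ), f v * cos (2 * π * y * v)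
      = ∫ v in (0:ℝ)..δ, f v * cos (2 * π * y * v) := by
    rw [intervalIntegral.integral_of_le hδ.le]
    apply MeasureTheory.setIntegral_eq_of_subset_of_forall_sdiff_eq_zero measurableSet_Ioi
      Set.Ioc_subset_Ioi_self
    rintro x ⟨hx, hx'⟩
    have : δ ≤ |x| := by
      rw [abs_of_pos hx]
      by_contra h
      exact hx' ⟨hx, by linarith⟩
    rw [hf, ext0_zero_of Φ h1 δ hδ x this, zero_mul]
  have hsub : ∫ v in (0:ℝ)..δ, f v * cos (2 * π * y * v)
      = ∫ u in (0:ℝ)..1, Φ u * cos (2 * π * (δ * y) * u) := by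
    have h := intervalIntegral.smul_integral_comp_mul_left (a := 0) (b := 1)
      (fun v => f v * cos (2 * π * y * v)) δ
    rw [mul_zero, mul_one] at h
    rw [← h, smul_eq_mul, ← intervalIntegral.integral_const_mul]
    apply intervalIntegral.integral_congr
    intro u hu
    rw [Set.uIcc_of_le zero_le_one] at hu
    simp only [hf, ext0]
    rw [abs_of_nonneg (mul_nonneg hδ.le hu.1), mul_div_cancel_left₀ _ hδ.ne', min_eq_left hu.2,
      show 2 * π * y * (δ * u) = 2 * π * (δ * y) * u by ring]
    field_simp
  rw [heq, hIoi, hsub]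
  simp

/-- Poisson summation, real form. -/
lemma poisson (Φ : ℝ → ℝ) (hΦ : Continuous Φ) (h1 : Φ 1 = 0) (δ : ℝ) (hδ : 0 < δ) (h : ℝ → ℝ)
    (hh : ∀ y, h y = 2 * ∫ u in (0:ℝ)..1, Φ u * cos (2 * π * y * u))
    (hs : Summable (fun k : ℤ => h (δ * k))) (t : ℝ) :
    HasSum (fun k : ℤ => h (δ * k) * cos (2 * π * k * t)) (∑' n : ℤ, ext0 Φ δ (t + n)) := by
  have hF : ∀ k : ℤ, FourierTransform.fourier (fun t : ℝ => (ext0 Φ δ t : ℂ)) (k : ℝ) = (h (δ * k) : ℂ) := by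
    intro k
    rw [fourier_ext0 Φ hΦ h1 δ hδ, hh]
  have hsC : Summable (fun k : ℤ => FourierTransform.fourier (fun t : ℝ => (ext0 Φ δ t : ℂ)) (k : ℝ)) := by
    simp_rw [hF]
    exact_mod_cast hs
  have hbig : (fun t : ℝ => (ext0 Φ δ t : ℂ)) =O[Filter.cocompact ℝ] fun x : ℝ => |x| ^ (-(2:ℝ)) := by
    have hcs : HasCompactSupport (fun t : ℝ => (ext0 Φ δ t : ℂ)) :=
      (ext0_hcs Φ h1 δ hδ).comp_left (g := fun x : ℝ => (x : ℂ)) (by simp)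
    rw [hasCompactSupport_iff_eventuallyEq] at hcs
    exact (Asymptotics.isBigO_zero _ _).congr' (Filter.EventuallyEq.symm (hcs.filter_mono (Filter.cocompact_le_coclosedCompact))) (Filter.EventuallyEq.refl _ _)
  have hp := Real.tsum_eq_tsum_fourier_of_rpow_decay_of_summable
    (Complex.continuous_ofReal.comp (ext0_cont Φ hΦ δ)) (b := 2) (by norm_num) hbig hsC t
  have hsum : Summable (fun k : ℤ => (h (δ * k) : ℂ) * fourier k (t : UnitAddCircle)) := by
    apply Summable.of_norm
    have : ∀ k : ℤ, ‖(h (δ * k) : ℂ) * fourier k (t : UnitAddCircle)‖ = ‖h (δ * k)‖ := by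
      intro k
      rw [norm_mul, Complex.norm_real, fourier_apply, Circle.norm_coe, mul_one]
    simp_rw [this]
    exact hs.norm
  have hH := hsum.hasSum
  have hre := Complex.hasSum_re hH
  convert hre using 1
  · funext k
    rw [fourier_coe_apply, Complex.re_ofReal_mul]
    congr 1
    rw [show (2 * (π:ℂ) * Complex.I * k * t / (1:ℝ)) = ((2 * π * k * t : ℝ) : ℂ) * Complex.I by
      push_cast; ring, Complex.exp_ofReal_mul_I_re]
  · have : ∑' k : ℤ, (h (δ * k) : ℂ) * fourier k (t : UnitAddCircle)
      = ((∑' n : ℤ, ext0 Φ δ (t + n) : ℝ) : ℂ) := by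
      rw [Complex.ofReal_tsum]
      rw [tsum_congr (fun k => by rw [← hF k])]
      exact hp.symm
    rw [this, Complex.ofReal_re]

lemma poisson_zero (Φ : ℝ → ℝ) (h1 : Φ 1 = 0) (δ : ℝ) (hδ : 0 < δ) (t : ℝ)
    (ht : ∀ n : ℤ, δ ≤ |t + n|) : ∑' n : ℤ, ext0 Φ δ (t + n) = 0 := by
  rw [tsum_congr (fun n => ext0_zero_of Φ h1 δ hδ _ (ht n)), tsum_zero]

lemma poisson_at_zero (Φ : ℝ → ℝ) (h1 : Φ 1 = 0) (δ : ℝ) (hδ : 0 < δ) (hδ1 : δ ≤ 1) :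
    ∑' n : ℤ, ext0 Φ δ (0 + n) = Φ 0 / δ := by
  rw [tsum_eq_single 0]
  · simp [ext0]; field_simp
  · intro n hn
    apply ext0_zero_of Φ h1 δ hδ
    rw [zero_add]
    have : (1:ℤ) ≤ |n| := Int.one_le_abs hn
    have : (1:ℝ) ≤ |(n:ℝ)| := by exact_mod_cast this
    linarith

lemma int_tent (w : ℝ) : ∫ u in (0:ℝ)..1, (1 - u) * cos (2 * π * w * u) = sinc (π * w) ^ 2 / 2 := by
  by_cases hw : w = 0
  · subst hw
    have : ∫ u in (0:ℝ)..1, (1 - u) = 1 / 2 := by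
      rw [intervalIntegral.integral_sub (by simp) (by simp)]
      simp
      norm_num
    simp [this]
  · have hpi := pi_ne_zero
    have hc : 2 * π * w ≠ 0 := by positivity
    have hd : ∀ u ∈ Set.uIcc (0:ℝ) 1, HasDerivAt (fun u => (1 - u) * (sin (2 * π * w * u) / (2 * π * w))
        - cos (2 * π * w * u) / (2 * π * w) ^ 2) ((1 - u) * cos (2 * π * w * u)) u := by
      intro u _
      have hl : HasDerivAt (fun u : ℝ => 2 * π * w * u) (2 * π * w) u := by
        simpa using (hasDerivAt_id u).const_mul (2 * π * w)
      have h := (((hasDerivAt_id u).const_sub 1).mul (hl.sin.div_const (2 * π * w))).sub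
        (hl.cos.div_const ((2 * π * w) ^ 2))
      refine HasDerivAt.congr_deriv h ?_
      field_simp
      simp
      try ring
    rw [intervalIntegral.integral_eq_sub_of_hasDerivAt hd
      (Continuous.intervalIntegrable (by fun_prop) _ _)]
    rw [sinc_of_ne_zero (mul_ne_zero hpi hw)]
    have h2 : cos (2 * π * w) = 1 - 2 * sin (π * w) ^ 2 := by
      rw [mul_assoc, cos_two_mul]
      have := sin_sq_add_cos_sq (π * w)
      linarith
    simp only [mul_one, mul_zero, cos_zero, sin_zero, h2]
    field_simp
    ring

lemma int_sin (w : ℝ) : ∫ u in (0:ℝ)..1, sin (2 * π * w * u) = π * (w * sinc (π * w) ^ 2) := by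
  by_cases hw : w = 0
  · subst hw; simp
  · have hpi := pi_ne_zero
    have hc : 2 * π * w ≠ 0 := by positivity
    have hd : ∀ u ∈ Set.uIcc (0:ℝ) 1, HasDerivAt (fun u => - (cos (2 * π * w * u) / (2 * π * w)))
        (sin (2 * π * w * u)) u := by
      intro u _
      have hl : HasDerivAt (fun u : ℝ => 2 * π * w * u) (2 * π * w) u := by
        simpa using (hasDerivAt_id u).const_mul (2 * π * w)
      have h := (hl.cos.div_const (2 * π * w)).neg
      refine HasDerivAt.congr_deriv h ?_
      rw [neg_mul, neg_div, neg_neg, mul_div_cancel_right₀ _ hc]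
    rw [intervalIntegral.integral_eq_sub_of_hasDerivAt hd
      (Continuous.intervalIntegrable (by fun_prop) _ _)]
    rw [sinc_of_ne_zero (mul_ne_zero hpi hw)]
    have h2 : cos (2 * π * w) = 1 - 2 * sin (π * w) ^ 2 := by
      rw [mul_assoc, cos_two_mul]
      have := sin_sq_add_cos_sq (π * w)
      linarith
    simp only [mul_one, mul_zero, cos_zero, h2]
    field_simp
    ring

def Φp (L : ℕ) (u : ℝ) : ℝ :=
  ∑ n ∈ Finset.range (L + 1), (1 - u) * cos (2 * π * (n - L / 2) * u) + π⁻¹ * sin (2 * π * (L / 2) * u)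

def Φd (L : ℕ) (u : ℝ) : ℝ := 2 * ((1 - u) * cos (2 * π * (L / 2) * u))

lemma Φp_cont (L : ℕ) : Continuous (Φp L) := by unfold Φp; fun_prop
lemma Φd_cont (L : ℕ) : Continuous (Φd L) := by unfold Φd; fun_prop
lemma Φp_one (L : ℕ) : Φp L 1 = 0 := by
  unfold Φp
  have : 2 * π * ((L:ℝ) / 2) * 1 = L * π := by ring
  rw [this, sin_nat_mul_pi]; simp
lemma Φd_one (L : ℕ) : Φd L 1 = 0 := by simp [Φd]
lemma Φp_zero (L : ℕ) : Φp L 0 = L + 1 := by simp [Φp]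
lemma Φd_zero (L : ℕ) : Φd L 0 = 2 := by simp [Φd]

lemma int_tent_cos (c y : ℝ) : ∫ u in (0:ℝ)..1, (1 - u) * cos (2 * π * c * u) * cos (2 * π * y * u)
    = sinc (π * (y + c)) ^ 2 / 4 + sinc (π * (y - c)) ^ 2 / 4 := by
  have h : ∀ u : ℝ, (1 - u) * cos (2 * π * c * u) * cos (2 * π * y * u)
      = ((1 - u) * cos (2 * π * (y + c) * u)) / 2 + ((1 - u) * cos (2 * π * (y - c) * u)) / 2 := by
    intro u
    rw [show 2 * π * (y + c) * u = 2 * π * y * u + 2 * π * c * u by ring,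
      show 2 * π * (y - c) * u = 2 * π * y * u - 2 * π * c * u by ring, cos_add, cos_sub]
    ring
  simp_rw [h]
  rw [intervalIntegral.integral_add (Continuous.intervalIntegrable (by fun_prop) _ _)
    (Continuous.intervalIntegrable (by fun_prop) _ _), intervalIntegral.integral_div,
    intervalIntegral.integral_div, int_tent, int_tent]
  ring

lemma Hd_int (L : ℕ) (y : ℝ) :
    Hd L (y + L / 2) = 2 * ∫ u in (0:ℝ)..1, Φd L u * cos (2 * π * y * u) := by
  unfold Φd Hd
  simp_rw [mul_assoc (2:ℝ) ((1 - _) * _) _]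
  rw [intervalIntegral.integral_const_mul, int_tent_cos,
    show y + (L:ℝ) / 2 - L = y - L / 2 by ring]
  ring

lemma Hp_integral (L : ℕ) (y : ℝ) :
    Hp L (y + L / 2) = 2 * ∫ u in (0:ℝ)..1, Φp L u * cos (2 * π * y * u) := by
  unfold Φp Hp
  have h : ∀ u : ℝ, (∑ n ∈ Finset.range (L + 1), (1 - u) * cos (2 * π * (n - L / 2) * u)
      + π⁻¹ * sin (2 * π * (L / 2) * u)) * cos (2 * π * y * u)
      = (∑ n ∈ Finset.range (L + 1), (1 - u) * cos (2 * π * (n - L / 2) * u) * cos (2 * π * y * u))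
        + (π⁻¹ / 2 * sin (2 * π * (y + L / 2) * u) - π⁻¹ / 2 * sin (2 * π * (y - L / 2) * u)) := by
    intro u
    rw [show 2 * π * (y + L / 2) * u = 2 * π * y * u + 2 * π * (L / 2) * u by ring,
      show 2 * π * (y - L / 2) * u = 2 * π * y * u - 2 * π * (L / 2) * u by ring, sin_add, sin_sub,
      add_mul, Finset.sum_mul]
    ring
  simp_rw [h]
  rw [intervalIntegral.integral_add (Continuous.intervalIntegrable (by fun_prop) _ _)
    (Continuous.intervalIntegrable (by fun_prop) _ _),
    intervalIntegral.integral_sub (Continuous.intervalIntegrable (by fun_prop) _ _)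
    (Continuous.intervalIntegrable (by fun_prop) _ _),
    intervalIntegral.integral_finsetSum
      (fun n _ => Continuous.intervalIntegrable (by fun_prop) _ _),
    intervalIntegral.integral_const_mul, intervalIntegral.integral_const_mul, int_sin, int_sin]
  simp_rw [int_tent_cos]
  rw [Finset.sum_add_distrib]
  have e : ∑ n ∈ Finset.range (L + 1), sinc (π * (y + (n - L / 2))) ^ 2 / 4
      = ∑ n ∈ Finset.range (L + 1), sinc (π * (y - (n - L / 2))) ^ 2 / 4 := by
    rw [← Finset.sum_range_reflect]
    refine Finset.sum_congr rfl fun n hn => ?_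
    rw [Finset.mem_range] at hn
    rw [show L + 1 - 1 - n = L - n by omega, Nat.cast_sub (by omega)]
    congr 4
    ring
  rw [e, ← Finset.sum_div, show y + (L:ℝ) / 2 - L = y - L / 2 by ring]
  have e2 : ∀ n : ℕ, y + (L:ℝ) / 2 - n = y - (n - L / 2) := fun n => by ring
  simp_rw [e2]
  generalize ∑ n ∈ Finset.range (L + 1), sinc (π * (y - (n - L / 2))) ^ 2 = S
  generalize sinc (π * (y + L / 2)) = A
  generalize sinc (π * (y - L / 2)) = B
  have hpi := pi_ne_zero
  field_simp
  ring

lemma mul_sinc (x : ℝ) : x * sinc x = sin x := by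
  by_cases h : x = 0
  · simp [h]
  · rw [sinc_of_ne_zero h]; field_simp

lemma summable_sinc (δ : ℝ) (hδ : 0 < δ) (c : ℝ) :
    Summable (fun k : ℤ => sinc (π * (δ * k + c)) ^ 2) := by
  have h := ((Real.summable_one_div_int_add_rpow (c / δ) 2).mpr (by norm_num)).mul_left (1 / (π * δ) ^ 2)
  refine h.of_norm_bounded_eventually ?_
  have hfin : {k : ℤ | (k:ℝ) + c / δ = 0}.Finite := by
    apply Set.Subsingleton.finite
    intro a ha b hb
    simp only [Set.mem_ofPred_eq] at ha hb
    have : (a:ℝ) = b := by linarith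
    exact_mod_cast this
  filter_upwards [hfin.compl_mem_cofinite] with k hk
  have hk' : (k:ℝ) + c / δ ≠ 0 := hk
  have hpi := pi_ne_zero
  have e : π * (δ * k + c) = π * δ * (k + c / δ) := by field_simp
  rw [e, sinc_of_ne_zero (by positivity), Real.norm_eq_abs, abs_of_nonneg (by positivity), div_pow,
    mul_pow (π * δ), Real.rpow_two, sq_abs]
  have h1 : sin (π * δ * (k + c / δ)) ^ 2 ≤ 1 := sin_sq_le_one _
  rw [div_mul_div_comm, one_mul]
  gcongr

lemma Hd_summable (L : ℕ) (δ : ℝ) (hδ : 0 < δ) : Summable (fun k : ℤ => Hd L (δ * k + L / 2)) := by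
  unfold Hd
  refine (summable_sinc δ hδ _).add ?_
  refine (summable_sinc δ hδ (L / 2 - L)).congr fun k => ?_
  rw [add_sub_assoc]

lemma Hp_summable (L : ℕ) (δ : ℝ) (hδ : 0 < δ) : Summable (fun k : ℤ => Hp L (δ * k + L / 2)) := by
  unfold Hp
  simp_rw [add_sub_assoc]
  refine Summable.add ?_ ?_
  · apply summable_sum
    intro n _
    exact summable_sinc δ hδ _
  · have key : ∀ z : ℝ, ‖z * sinc (π * z) ^ 2 - (z - L) * sinc (π * (z - L)) ^ 2‖
        ≤ L / 2 * Hd L z := by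
      intro z
      set A := sinc (π * z) with hA
      set B := sinc (π * (z - L)) with hB
      have h1 : π * z * A = sin (π * z) := mul_sinc _
      have h2 : π * (z - L) * B = (-1) ^ L * sin (π * z) := by
        rw [hB, mul_sinc, mul_sub, mul_comm π (L:ℝ), sin_sub_nat_mul_pi]
      have hpi := pi_ne_zero
      have h3 : (z - L) * B = (-1) ^ L * (z * A) := by
        rw [← h1] at h2
        have : π * ((z - L) * B) = π * ((-1) ^ L * (z * A)) := by linarith
        exact mul_left_cancel₀ hpi this
      have hsq : ((-1:ℝ) ^ L) * (-1) ^ L = 1 := by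
        rw [← mul_pow]; simp
      have h4 : z * A = (-1) ^ L * ((z - L) * B) := by
        rw [h3, ← mul_assoc, hsq, one_mul]
      have h5 : z * A ^ 2 - (z - L) * B ^ 2 = -((-1) ^ L * L * (A * B)) := by
        linear_combination A * h4 - B * h3
      rw [h5, norm_neg, norm_mul, norm_mul, norm_pow, norm_neg, norm_one, one_pow, one_mul,
        Real.norm_natCast, Real.norm_eq_abs]
      have h6 : |A * B| ≤ (A ^ 2 + B ^ 2) / 2 := by
        rw [abs_le]; constructor <;> nlinarith [sq_nonneg (A + B), sq_nonneg (A - B)]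
      unfold Hd
      rw [← hA, ← hB]
      nlinarith [Nat.cast_nonneg (α := ℝ) L]
    refine Summable.of_norm_bounded ((Hd_summable L δ hδ).mul_left (L / 2 : ℝ)) fun k => ?_
    have := key (δ * k + L / 2)
    simp_rw [add_sub_assoc] at this
    exact this

/-- Selberg majorant data on the integers. -/
lemma selberg (m L : ℕ) (hL : 1 ≤ L) (hLN : L ≤ 2 * m + 1) :
    ∃ (p r : ℤ → ℝ) (GP GR : ℝ → ℝ),
      (∀ k : ℤ, (if k ∈ Finset.Icc (-(m:ℤ)) m then (1:ℝ) else 0) ≤ p k) ∧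
      (∀ k : ℤ, p k - r k ≤ (if k ∈ Finset.Icc (-(m:ℤ)) m then (1:ℝ) else 0)) ∧
      (∀ t, Filter.Tendsto (fun R : ℕ => ∑ k ∈ Finset.Icc (-(R:ℤ)) R, p k * cos (2 * π * k * t))
        Filter.atTop (nhds (GP t))) ∧
      (∀ t, Filter.Tendsto (fun R : ℕ => ∑ k ∈ Finset.Icc (-(R:ℤ)) R, r k * cos (2 * π * k * t))
        Filter.atTop (nhds (GR t))) ∧
      (∀ t : ℝ, (∀ n : ℤ, (L:ℝ) / (2 * m + 1) ≤ |t + n|) → GP t = 0 ∧ GR t = 0) ∧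
      GP 0 = (2 * m + 1) * (1 + 1 / L) ∧ GR 0 = (2 * m + 1) * (2 * (1 / L)) := by
  set δ : ℝ := (L:ℝ) / (2 * m + 1) with hδ
  have hL0 : (0:ℝ) < L := by exact_mod_cast hL
  have hδ0 : 0 < δ := by positivity
  have hδ1 : δ ≤ 1 := by
    rw [hδ, div_le_one (by positivity)]
    exact_mod_cast hLN
  have hN : δ * (2 * m + 1) = L := by rw [hδ]; field_simp
  have lim : ∀ (f : ℤ → ℝ) (a : ℝ), HasSum f a →
      Filter.Tendsto (fun R : ℕ => ∑ k ∈ Finset.Icc (-(R:ℤ)) R, f k) Filter.atTop (nhds a) := by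
    intro f a h
    have h' : Filter.Tendsto (fun s : Finset ℤ => ∑ b ∈ s, f b) Filter.atTop (nhds a) := by
      simpa [HasSum] using h
    exact h'.comp (Finset.tendsto_Icc_neg (R := ℤ))
  refine ⟨fun k => Hp L (δ * k + L / 2), fun k => Hd L (δ * k + L / 2),
    fun t => ∑' n : ℤ, ext0 (Φp L) δ (t + n), fun t => ∑' n : ℤ, ext0 (Φd L) δ (t + n),
    ?_, ?_, ?_, ?_, ?_, ?_, ?_⟩
  · intro k
    split_ifs with hk
    · rw [Finset.mem_Icc] at hk
      have h1 : -(m:ℝ) ≤ k := by exact_mod_cast hk.1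
      have h2 : (k:ℝ) ≤ m := by exact_mod_cast hk.2
      apply Hp_ge_one <;> nlinarith
    · rw [Finset.mem_Icc, not_and_or] at hk
      rcases hk with hk | hk
      · have h1 : (k:ℝ) ≤ -m - 1 := by
          have : k ≤ -(m:ℤ) - 1 := by omega
          exact_mod_cast this
        exact (Hp_outside' L _ (by nlinarith)).1
      · have h1 : (m:ℝ) + 1 ≤ k := by
          have : (m:ℤ) + 1 ≤ k := by omega
          exact_mod_cast this
        exact (Hp_outside L _ (by nlinarith)).1
  · intro k
    split_ifs with hk
    · rw [Finset.mem_Icc] at hk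
      have h1 : -(m:ℝ) ≤ k := by exact_mod_cast hk.1
      have h2 : (k:ℝ) ≤ m := by exact_mod_cast hk.2
      apply Hm_le_one <;> nlinarith
    · rw [Finset.mem_Icc, not_and_or] at hk
      rcases hk with hk | hk
      · have h1 : (k:ℝ) ≤ -m - 1 := by
          have : k ≤ -(m:ℤ) - 1 := by omega
          exact_mod_cast this
        exact (Hp_outside' L _ (by nlinarith)).2
      · have h1 : (m:ℝ) + 1 ≤ k := by
          have : (m:ℤ) + 1 ≤ k := by omega
          exact_mod_cast this
        exact (Hp_outside L _ (by nlinarith)).2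
  · intro t
    exact lim _ _ (poisson (Φp L) (Φp_cont L) (Φp_one L) δ hδ0 (fun y => Hp L (y + L / 2))
      (Hp_integral L) (Hp_summable L δ hδ0) t)
  · intro t
    exact lim _ _ (poisson (Φd L) (Φd_cont L) (Φd_one L) δ hδ0 (fun y => Hd L (y + L / 2))
      (Hd_int L) (Hd_summable L δ hδ0) t)
  · intro t ht
    exact ⟨poisson_zero _ (Φp_one L) δ hδ0 t ht, poisson_zero _ (Φd_one L) δ hδ0 t ht⟩
  · show ∑' n : ℤ, ext0 (Φp L) δ (0 + n) = _
    rw [poisson_at_zero _ (Φp_one L) δ hδ0 hδ1, Φp_zero, hδ]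
    field_simp
  · show ∑' n : ℤ, ext0 (Φd L) δ (0 + n) = _
    rw [poisson_at_zero _ (Φd_one L) δ hδ0 hδ1, Φd_zero, hδ]
    field_simp

lemma prod_ineq {ι : Type*} [DecidableEq ι] (s : Finset ι) (p r u : ι → ℝ)
    (h0 : ∀ i, 0 ≤ u i) (h1 : ∀ i, u i ≤ p i) (h2 : ∀ i, p i - r i ≤ u i) :
    ∏ i ∈ s, p i - ∑ i ∈ s, ∏ l ∈ s, (if l = i then r l else p l) ≤ ∏ i ∈ s, u i := by
  induction s using Finset.induction_on with
  | empty => simp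
  | insert a s ha ih =>
    rw [Finset.prod_insert ha, Finset.prod_insert ha, Finset.sum_insert ha, Finset.prod_insert ha,
      if_pos rfl]
    have e1 : ∏ l ∈ s, (if l = a then r l else p l) = ∏ l ∈ s, p l := by
      refine Finset.prod_congr rfl fun l hl => ?_
      rw [if_neg]; rintro rfl; exact ha hl
    have e2 : ∑ i ∈ s, ∏ l ∈ insert a s, (if l = i then r l else p l)
        = p a * ∑ i ∈ s, ∏ l ∈ s, (if l = i then r l else p l) := by
      rw [Finset.mul_sum]
      refine Finset.sum_congr rfl fun i hi => ?_
      rw [Finset.prod_insert ha, if_neg]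
      rintro rfl; exact ha hi
    rw [e1, e2]
    set P := ∏ l ∈ s, p l
    set S := ∑ i ∈ s, ∏ l ∈ s, (if l = i then r l else p l)
    set U := ∏ i ∈ s, u i
    have hPU : U ≤ P := Finset.prod_le_prod (fun i _ => h0 i) (fun i _ => h1 i)
    have hU : 0 ≤ U := Finset.prod_nonneg fun i _ => h0 i
    have hp : 0 ≤ p a := (h0 a).trans (h1 a)
    nlinarith [h0 a, h1 a, h2 a, mul_nonneg hp (sub_nonneg.mpr ih),
      mul_nonneg (sub_nonneg.mpr (h1 a)) (sub_nonneg.mpr hPU),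
      mul_nonneg (sub_nonneg.mpr (h2 a)) (hU.trans hPU)]

def Fk {d s : ℕ} (θ : Fin s → EuclideanSpace ℝ (Fin d)) (v : Fin s → ℝ) (κ : Fin d → ℤ) : ℝ :=
  ∑ j, ∑ k, v j * (∏ l, cos (2 * π * κ l * (θ j - θ k) l)) * v k

lemma Fk_nonneg {d s : ℕ} (θ : Fin s → EuclideanSpace ℝ (Fin d)) (v : Fin s → ℝ) (κ : Fin d → ℤ) :
    0 ≤ Fk θ v κ := by
  let φ : Bool → ℝ → ℝ := fun b x => if b then cos x else sin x
  have key : Fk θ v κ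
      = ∑ ε : Fin d → Bool, (∑ j, v j * ∏ l, φ (ε l) (2 * π * κ l * θ j l)) ^ 2 := by
    have h1 : ∀ j k, ∏ l, cos (2 * π * κ l * (θ j - θ k) l)
        = ∑ ε : Fin d → Bool, (∏ l, φ (ε l) (2 * π * κ l * θ j l)) * ∏ l, φ (ε l) (2 * π * κ l * θ k l) := by
      intro j k
      simp_rw [← Finset.prod_mul_distrib]
      rw [← Fintype.piFinset_univ, ← Finset.prod_univ_sum (fun _ => Finset.univ)
        (fun l (b : Bool) => φ b (2 * π * κ l * θ j l) * φ b (2 * π * κ l * θ k l))]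
      refine Finset.prod_congr rfl fun l _ => ?_
      simp only [Fintype.sum_bool, φ, if_true, PiLp.sub_apply, mul_sub, cos_sub]
      simp
    unfold Fk
    simp_rw [h1, sq, Finset.sum_mul_sum, Finset.mul_sum, Finset.sum_mul]
    symm
    rw [Finset.sum_comm]
    refine Finset.sum_congr rfl fun j _ => ?_
    rw [Finset.sum_comm]
    refine Finset.sum_congr rfl fun k _ => ?_
    refine Finset.sum_congr rfl fun ε _ => ?_
    ring
  rw [key]
  positivity

def Ek {d s : ℕ} (θ : Fin s → EuclideanSpace ℝ (Fin d)) (v : Fin s → ℝ) (w : Fin d → ℤ → ℝ)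
    (R : ℕ) : ℝ :=
  ∑ j, ∑ k, v j * (∏ l, ∑ κ ∈ Finset.Icc (-(R:ℤ)) R, w l κ * cos (2 * π * κ * (θ j - θ k) l)) * v k

lemma Ek_eq {d s : ℕ} (θ : Fin s → EuclideanSpace ℝ (Fin d)) (v : Fin s → ℝ) (w : Fin d → ℤ → ℝ)
    (R : ℕ) : Ek θ v w R = ∑ κ ∈ Fintype.piFinset (fun _ : Fin d => Finset.Icc (-(R:ℤ)) R),
      (∏ l, w l (κ l)) * Fk θ v κ := by
  unfold Ek Fk
  simp_rw [Finset.prod_univ_sum, Finset.prod_mul_distrib, Finset.mul_sum, Finset.sum_mul]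
  symm
  rw [Finset.sum_comm]
  refine Finset.sum_congr rfl fun j _ => ?_
  rw [Finset.sum_comm]
  refine Finset.sum_congr rfl fun k _ => ?_
  refine Finset.sum_congr rfl fun κ _ => ?_
  ring

lemma Ek_tendsto {d s : ℕ} (θ : Fin s → EuclideanSpace ℝ (Fin d)) (v : Fin s → ℝ)
    (w : Fin d → ℤ → ℝ) (G : Fin d → ℝ → ℝ)
    (hG : ∀ l t, Filter.Tendsto (fun R : ℕ => ∑ k ∈ Finset.Icc (-(R:ℤ)) R, w l k * cos (2 * π * k * t))
        Filter.atTop (nhds (G l t)))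
    (h0 : ∀ j k, j ≠ k → ∃ l, G l ((θ j - θ k) l) = 0) :
    Filter.Tendsto (Ek θ v w) Filter.atTop (nhds ((∏ l, G l 0) * ∑ i, v i ^ 2)) := by
  have h : Filter.Tendsto (Ek θ v w) Filter.atTop
      (nhds (∑ j, ∑ k, v j * (∏ l, G l ((θ j - θ k) l)) * v k)) := by
    unfold Ek
    refine tendsto_finsetSum _ fun j _ => tendsto_finsetSum _ fun k _ => ?_
    refine Filter.Tendsto.mul_const _ (Filter.Tendsto.const_mul _ ?_)
    exact tendsto_finsetProd _ fun l _ => hG l _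
  convert h using 2
  rw [Finset.mul_sum]
  refine Finset.sum_congr rfl fun j _ => ?_
  rw [Finset.sum_eq_single j]
  · simp; ring
  · intro k _ hk
    obtain ⟨l, hl⟩ := h0 j k hk.symm
    rw [Finset.prod_eq_zero (Finset.mem_univ l) hl]; ring
  · simp

lemma torus_coord {d : ℕ} (hd : 1 ≤ d) (x y : EuclideanSpace ℝ (Fin d)) (b δ : ℝ) (hδ : 0 < δ)
    (hb : b = δ * √d) (h : b ≤ torusDist x y) : ∃ l, ∀ n : ℤ, δ ≤ |(x - y) l + n| := by
  by_contra hc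
  push Not at hc
  choose n hn using hc
  have h1 : torusDist x y ≤ ‖x - y + ∑ i, ((n i : ℝ)) • EuclideanSpace.single i (1 : ℝ)‖ := by
    unfold torusDist
    exact ciInf_le ⟨0, by rintro _ ⟨q, rfl⟩; positivity⟩ n
  have hco : ∀ l, (x - y + ∑ i, ((n i : ℝ)) • EuclideanSpace.single i (1 : ℝ)) l = (x - y) l + n l := by
    intro l
    simp [PiLp.add_apply, Finset.sum_apply, Pi.single_apply]
  have h2 : ‖x - y + ∑ i, ((n i : ℝ)) • EuclideanSpace.single i (1 : ℝ)‖ ^ 2 < b ^ 2 := by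
    rw [EuclideanSpace.norm_sq_eq]
    simp_rw [hco, Real.norm_eq_abs]
    have : ∑ l : Fin d, |(x - y) l + n l| ^ 2 < ∑ _l : Fin d, δ ^ 2 := by
      have : Nonempty (Fin d) := ⟨⟨0, hd⟩⟩
      apply Finset.sum_lt_sum_of_nonempty Finset.univ_nonempty
      intro l _
      have := hn l
      gcongr
    refine this.trans_le ?_
    rw [hb, mul_pow, sq_sqrt (by positivity)]
    simp [mul_comm]
  have hb0 : 0 ≤ b := by rw [hb]; positivity
  have := lt_of_pow_lt_pow_left₀ 2 hb0 h2
  linarith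

/-- Bounds in terms of `L`. -/
lemma main_bound (d : ℕ) (m L : ℕ) (hL : 1 ≤ L) (hLN : L ≤ 2 * m + 1) (s : ℕ)
    (θ : Fin s → EuclideanSpace ℝ (Fin d))
    (hsep : ∀ j k, j ≠ k → ∃ l, ∀ n : ℤ, (L:ℝ) / (2 * m + 1) ≤ |(θ j - θ k) l + n|)
    (v : Fin s → ℝ) :
    ((1 + 1 / (L:ℝ)) ^ d - d * (2 * (1 / (L:ℝ)) * (1 + 1 / (L:ℝ)) ^ (d - 1))) * ∑ i, v i ^ 2
      ≤ ∑ j, ∑ k, v j * sqDirKer d m (θ j - θ k) * v k ∧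
    ∑ j, ∑ k, v j * sqDirKer d m (θ j - θ k) * v k ≤ (1 + 1 / (L:ℝ)) ^ d * ∑ i, v i ^ 2 := by
  obtain ⟨p, r, GP, GR, hup, hpr, hGP, hGR, hz, hGP0, hGR0⟩ := selberg m L hL hLN
  set u : ℤ → ℝ := fun k => if k ∈ Finset.Icc (-(m:ℤ)) m then (1:ℝ) else 0 with hu
  set N : ℝ := 2 * m + 1 with hN
  have hN0 : 0 < N := by positivity
  set Q := ∑ j, ∑ k, v j * sqDirKer d m (θ j - θ k) * v k with hQ
  have hu0 : ∀ k, 0 ≤ u k := fun k => by simp only [hu]; split_ifs <;> norm_num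
  have hEu : ∀ R : ℕ, m ≤ R → Ek θ v (fun _ => u) R = N ^ d * Q := by
    intro R hR
    have h1 : ∀ t : ℝ, ∑ κ ∈ Finset.Icc (-(R:ℤ)) R, u κ * cos (2 * π * κ * t) = N * dirKer m t := by
      intro t
      unfold dirKer
      rw [← hN, ← mul_assoc, mul_inv_cancel₀ hN0.ne', one_mul]
      have hsub : Finset.Icc (-(m:ℤ)) m ⊆ Finset.Icc (-(R:ℤ)) R :=
        Finset.Icc_subset_Icc (by omega) (by omega)
      rw [← Finset.sum_subset hsub]
      · refine Finset.sum_congr rfl fun k hk => ?_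
        simp only [hu]
        rw [if_pos hk, one_mul]
      · intro k _ hk
        simp only [hu]
        rw [if_neg hk, zero_mul]
    unfold Ek
    simp_rw [h1, Finset.prod_mul_distrib, Finset.prod_const, Finset.card_univ, Fintype.card_fin]
    rw [hQ, Finset.mul_sum]
    refine Finset.sum_congr rfl fun j _ => ?_
    rw [Finset.mul_sum]
    refine Finset.sum_congr rfl fun k _ => ?_
    unfold sqDirKer
    ring
  have htP : Filter.Tendsto (Ek θ v (fun _ => p)) Filter.atTop
      (nhds ((∏ _l : Fin d, GP 0) * ∑ i, v i ^ 2)) :=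
    Ek_tendsto θ v (fun _ => p) (fun _ => GP) (fun _ => hGP) (fun j k hjk => by
      obtain ⟨l, hl⟩ := hsep j k hjk
      exact ⟨l, (hz _ hl).1⟩)
  have htR : ∀ i : Fin d, Filter.Tendsto (Ek θ v (fun l => if l = i then r else p)) Filter.atTop
      (nhds ((∏ l : Fin d, (if l = i then GR else GP) 0) * ∑ i, v i ^ 2)) := fun i =>
    Ek_tendsto θ v (fun l => if l = i then r else p) (fun l => if l = i then GR else GP)
      (fun l t => by
        by_cases h : l = i
        · simpa only [if_pos h] using hGR t
        · simpa only [if_neg h] using hGP t)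
      (fun j k hjk => by
        obtain ⟨l, hl⟩ := hsep j k hjk
        refine ⟨l, ?_⟩
        by_cases h : l = i
        · simpa only [if_pos h] using (hz _ hl).2
        · simpa only [if_neg h] using (hz _ hl).1)
  have hprodR : ∀ i : Fin d, ∏ l : Fin d, (if l = i then GR else GP) 0
      = N ^ d * (2 * (1 / (L:ℝ)) * (1 + 1 / (L:ℝ)) ^ (d - 1)) := by
    intro i
    rw [← Finset.mul_prod_erase _ _ (Finset.mem_univ i), if_pos rfl]
    have : ∏ l ∈ Finset.univ.erase i, (if l = i then GR else GP) 0 = GP 0 ^ (d - 1) := by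
      rw [Finset.prod_congr rfl (g := fun _ => GP 0)]
      · rw [Finset.prod_const, Finset.card_erase_of_mem (Finset.mem_univ i), Finset.card_univ,
          Fintype.card_fin]
      · intro l hl
        rw [if_neg (Finset.ne_of_mem_erase hl)]
    rw [this, hGP0, hGR0]
    have hd : d = (d - 1) + 1 := by have := i.2; omega
    have : N ^ d = N ^ (d - 1) * N := by rw [← pow_succ, ← hd]
    rw [this, mul_pow]
    ring
  have hprodP : ∏ _l : Fin d, GP 0 = N ^ d * (1 + 1 / (L:ℝ)) ^ d := by
    rw [Finset.prod_const, Finset.card_univ, Fintype.card_fin, hGP0, mul_pow]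
  rw [hprodP] at htP
  simp_rw [hprodR] at htR
  have hNd : 0 < N ^ d := by positivity
  constructor
  · have hlim := htP.sub (tendsto_finsetSum Finset.univ fun i _ => htR i)
    rw [Finset.sum_const, Finset.card_univ, Fintype.card_fin, nsmul_eq_mul] at hlim
    have hle : N ^ d * (1 + 1 / (L:ℝ)) ^ d * ∑ i, v i ^ 2 - d * (N ^ d * (2 * (1 / (L:ℝ)) * (1 + 1 / (L:ℝ)) ^ (d - 1)) * ∑ i, v i ^ 2) ≤ N ^ d * Q := by
      refine le_of_tendsto hlim ?_
      filter_upwards [Filter.eventually_ge_atTop m] with R hR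
      rw [← hEu R hR, Ek_eq, Ek_eq]
      simp_rw [Ek_eq]
      rw [Finset.sum_comm, ← Finset.sum_sub_distrib]
      refine Finset.sum_le_sum fun κ _ => ?_
      rw [← Finset.sum_mul, ← sub_mul]
      refine mul_le_mul_of_nonneg_right ?_ (Fk_nonneg θ v κ)
      have := prod_ineq Finset.univ (fun l => p (κ l)) (fun l => r (κ l)) (fun l => u (κ l))
        (fun l => hu0 _) (fun l => hup _) (fun l => hpr _)
      simpa only [ite_apply] using this
    have : N ^ d * (((1 + 1 / (L:ℝ)) ^ d - d * (2 * (1 / (L:ℝ)) * (1 + 1 / (L:ℝ)) ^ (d - 1))) * ∑ i, v i ^ 2)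
        ≤ N ^ d * Q := by
      refine le_trans (le_of_eq ?_) hle
      ring
    exact le_of_mul_le_mul_left this hNd
  · have hle : N ^ d * Q ≤ N ^ d * (1 + 1 / (L:ℝ)) ^ d * ∑ i, v i ^ 2 := by
      refine ge_of_tendsto htP ?_
      filter_upwards [Filter.eventually_ge_atTop m] with R hR
      rw [← hEu R hR, Ek_eq, Ek_eq]
      refine Finset.sum_le_sum fun κ _ => ?_
      refine mul_le_mul_of_nonneg_right ?_ (Fk_nonneg θ v κ)
      exact Finset.prod_le_prod (fun l _ => hu0 _) (fun l _ => hup _)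
    rw [mul_assoc] at hle
    exact le_of_mul_le_mul_left hle hNd

lemma numeric (d : ℕ) (hd : 2 ≤ d) (x a : ℝ) (hx0 : 0 < x) (hx : x ≤ 0.23) (ha : 0 ≤ a)
    (hy : d * a ≤ 0.6 * x) :
    (1 + a) ^ d ≤ 1 + x ∧ 1 - x ≤ (1 + a) ^ d - d * (2 * a * (1 + a) ^ (d - 1)) := by
  have hd' : (2:ℝ) ≤ d := by exact_mod_cast hd
  have hy0 : 0 ≤ d * a := by positivity
  have hay : a ≤ d * a := by nlinarith
  constructor
  · have h1 : (1 + a) ^ d ≤ exp (d * a) := by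
      rw [exp_nat_mul]
      have := add_one_le_exp a
      gcongr
      linarith
    have h2 := abs_le.mp (Real.abs_exp_sub_one_sub_id_le (x := d * a) (by rw [abs_of_nonneg hy0]; linarith))
    nlinarith [h2.2]
  · have e : (1 + a) ^ d - d * (2 * a * (1 + a) ^ (d - 1)) = (1 + a) ^ (d - 1) * (1 + a - 2 * (d * a)) := by
      have : (1 + a) ^ d = (1 + a) ^ (d - 1) * (1 + a) := by
        rw [← pow_succ]; congr 1; omega
      rw [this]; ring
    rw [e]
    have h1 : 1 + ((d - 1 : ℕ) : ℝ) * a ≤ (1 + a) ^ (d - 1) := one_add_mul_le_pow (by linarith) _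
    rw [Nat.cast_sub (by omega), Nat.cast_one] at h1
    have h2 : 0 ≤ 1 + a - 2 * (d * a) := by linarith
    have h3 := mul_le_mul_of_nonneg_right h1 h2
    refine le_trans ?_ h3
    have e3 : 1 + ((d:ℝ) - 1) * a = 1 + (d * a) - a := by ring
    rw [e3]
    clear h1 h3 e e3
    generalize (d:ℝ) * a = y at *
    have k1 := mul_nonneg ha (sub_nonneg.mpr hay)
    have k2 := mul_nonneg hy0 ha
    have k3 : 0 ≤ y * (0.138 - y) := mul_nonneg hy0 (by linarith)
    nlinarith

theorem stmt8 (d : ℕ) (hd : 2 ≤ d) (m : ℕ) (hm : 1 ≤ m) (s : ℕ) (hs : 1 ≤ s)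
    (β : ℝ) (hβ : Real.pi * (d : ℝ) ^ ((3 : ℝ) / 2) / Real.log 2 ≤ β)
    (θ : Fin s → EuclideanSpace ℝ (Fin d))
    (hsep : ∀ j k, j ≠ k → β / m ≤ torusDist (θ j) (θ k)) :
    ∀ v : Fin s → ℝ,
      (1 - (d : ℝ) ^ ((3 : ℝ) / 2) / β) * ∑ i, v i ^ 2
          ≤ ∑ j, ∑ k, v j * sqDirKer d m (θ j - θ k) * v k ∧
      ∑ j, ∑ k, v j * sqDirKer d m (θ j - θ k) * v k
          ≤ (1 + (d : ℝ) ^ ((3 : ℝ) / 2) / β) * ∑ i, v i ^ 2 := by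
  intro v
  have hd' : (2:ℝ) ≤ d := by exact_mod_cast hd
  have hm' : (1:ℝ) ≤ m := by exact_mod_cast hm
  have hsq : 0 < √(d:ℝ) := by apply sqrt_pos.mpr; linarith
  have hpow : (d : ℝ) ^ ((3 : ℝ) / 2) = d * √d := by
    rw [show (3:ℝ) / 2 = 1 + 1 / 2 by norm_num, rpow_add (by linarith), rpow_one, sqrt_eq_rpow]
  rw [hpow] at hβ ⊢
  have hD : 0 < d * √(d:ℝ) := by positivity
  have hlog : 0 < Real.log 2 := Real.log_pos (by norm_num)
  have hβ0 : 0 < β := lt_of_lt_of_le (by positivity) hβ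
  set x := d * √(d:ℝ) / β with hx
  have hx0 : 0 < x := by positivity
  have hx1 : x ≤ 0.23 := by
    rw [hx, div_le_iff₀ hβ0]
    rw [div_le_iff₀ hlog] at hβ
    have h1 := Real.log_two_lt_d9
    have h2 := Real.pi_gt_d2
    nlinarith
  have hv : 0 ≤ ∑ i, v i ^ 2 := by positivity
  set δ := β / (m * √(d:ℝ)) with hδ
  have hδ0 : 0 < δ := by positivity
  have hco : ∀ j k, j ≠ k → ∃ l, ∀ n : ℤ, δ ≤ |(θ j - θ k) l + n| := by
    intro j k hjk
    refine torus_coord (by omega) (θ j) (θ k) (β / m) δ hδ0 ?_ (hsep j k hjk)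
    rw [hδ]; field_simp
  by_cases hδ1 : 1 < δ
  · have hall : ∀ j k : Fin s, j = k := by
      intro j k
      by_contra hjk
      obtain ⟨l, hl⟩ := hco j k hjk
      have h1 := hl (-round ((θ j - θ k) l))
      have h2 := abs_sub_round ((θ j - θ k) l)
      push_cast at h1
      rw [← sub_eq_add_neg] at h1
      linarith
    have hdir : sqDirKer d m 0 = 1 := by
      unfold sqDirKer dirKer
      apply Finset.prod_eq_one
      intro i _
      simp
      have : ((m:ℤ) + 1 + m).toNat = 2 * m + 1 := by omega
      rw [this]
      push_cast
      field_simp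
    have hQ : ∑ j, ∑ k, v j * sqDirKer d m (θ j - θ k) * v k = ∑ i, v i ^ 2 := by
      refine Finset.sum_congr rfl fun j _ => ?_
      rw [Finset.sum_eq_single j (fun k _ hk => absurd (hall k j) hk) (by simp), sub_self, hdir]
      ring
    rw [hQ]
    constructor <;> nlinarith
  · push Not at hδ1
    set N : ℝ := 2 * m + 1 with hN
    have hN0 : 0 < N := by positivity
    have hNδ : 2 * d ≤ N * δ * x := by
      have : N * δ * x = N * d / m := by
        rw [hδ, hx]; field_simp
      rw [this, le_div_iff₀ (by linarith), hN]
      nlinarith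
    set L := ⌊N * δ⌋₊ with hL
    have hLle : (L:ℝ) ≤ N * δ := Nat.floor_le (by positivity)
    have hLlt : N * δ < L + 1 := Nat.lt_floor_add_one _
    have hLx : (d:ℝ) ≤ 0.6 * x * L := by nlinarith
    have hLpos : (0:ℝ) < L := by
      by_contra h
      push Not at h
      nlinarith
    have hL1 : 1 ≤ L := by exact_mod_cast hLpos
    have hLN : L ≤ 2 * m + 1 := by
      have : (L:ℝ) ≤ 2 * m + 1 := hLle.trans (by rw [← hN]; nlinarith)
      exact_mod_cast this
    have hsep' : ∀ j k, j ≠ k → ∃ l, ∀ n : ℤ, (L:ℝ) / (2 * m + 1) ≤ |(θ j - θ k) l + n| := by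
      intro j k hjk
      obtain ⟨l, hl⟩ := hco j k hjk
      refine ⟨l, fun n => le_trans ?_ (hl n)⟩
      rw [← hN, div_le_iff₀ hN0]
      linarith
    obtain ⟨h1, h2⟩ := main_bound d m L hL1 hLN s θ hsep' v
    obtain ⟨h3, h4⟩ := numeric d hd x (1 / L) hx0 hx1 (by positivity) (by
      rw [mul_one_div, div_le_iff₀ hLpos]; exact hLx)
    exact ⟨(mul_le_mul_of_nonneg_right h4 hv).trans h1, h2.trans (mul_le_mul_of_nonneg_right h3 hv)⟩

end
end

section
/- Let d ≥ 2, let m ≥ 1 be an integer, let β ≥ 4π√d, and let θ_1,…,θ_s ∈ 𝕋^d be distinct points with Δ := Δ(ϑ) ≥ β/m. Then for every ω ∈ 𝕋^d: Σ over those ℓ with |ω − θ_ℓ| ≥ Δ/2 of |D_m(ω − θ_ℓ)|² is at most 16π²d²/β², and Σ over those ℓ with |ω − θ_ℓ| ≥ Δ/2 of |∇D_m(ω − θ_ℓ)|² is at most 64π⁴d³m²/β². -/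
noncomputable section

open Real
open scoped Classical

/-- Choice of the dominating coordinate set. -/
lemma exists_split {d : ℕ} (v : Fin d → ℝ) (B : ℝ) (hB : 0 ≤ B) :
    ∃ J : Finset (Fin d), ∑ i ∈ Jᶜ, v i ^ 2 ≤ B ∧
      (∀ i ∈ J, B < ∑ k ∈ Jᶜ, v k ^ 2 + v i ^ 2) ∧
      (∀ i ∈ J, ∀ k ∈ Jᶜ, v k ^ 2 ≤ v i ^ 2) := by
  let S : Finset (Finset (Fin d)) := Finset.univ.filter (fun J => ∑ i ∈ Jᶜ, v i ^ 2 ≤ B)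
  have hS : S.Nonempty := ⟨Finset.univ, by simp [S, hB]⟩
  obtain ⟨J0, hJ0, hmin⟩ := S.exists_min_image (fun J => J.card) hS
  let T := S.filter (fun J => J.card = J0.card)
  have hT : T.Nonempty := ⟨J0, by simp [T, hJ0]⟩
  obtain ⟨J, hJ, hJmin⟩ := T.exists_min_image (fun J => ∑ i ∈ Jᶜ, v i ^ 2) hT
  have hJS : J ∈ S := (Finset.mem_filter.1 hJ).1
  have hJc : J.card = J0.card := (Finset.mem_filter.1 hJ).2
  have hJB : ∑ i ∈ Jᶜ, v i ^ 2 ≤ B := (Finset.mem_filter.1 hJS).2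
  refine ⟨J, hJB, ?_, ?_⟩
  · intro i hi
    by_contra hcon
    push Not at hcon
    have h1 : ∑ k ∈ (J.erase i)ᶜ, v k ^ 2 = ∑ k ∈ Jᶜ, v k ^ 2 + v i ^ 2 := by
      rw [Finset.compl_erase, Finset.sum_insert (by simp [hi])]; ring
    have h2 : J.erase i ∈ S := by
      simp only [S, Finset.mem_filter, Finset.mem_univ, true_and]
      rw [h1]; exact hcon
    have h3 := hmin _ h2
    have h4 := Finset.card_erase_lt_of_mem hi
    omega
  · intro i hi k hk
    by_contra hcon
    push Not at hcon
    have hkJ : k ∉ J := by simpa using hk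
    have hik : i ≠ k := fun h => hkJ (h ▸ hi)
    let J' := insert k (J.erase i)
    have hc : J'.card = J.card := by
      rw [Finset.card_insert_of_notMem (by simp [hkJ]), Finset.card_erase_add_one hi]
    have e1 := Finset.sum_compl_add_sum J (fun k => v k ^ 2)
    have e2 := Finset.sum_compl_add_sum J' (fun k => v k ^ 2)
    have e3 : ∑ x ∈ J', v x ^ 2 = v k ^ 2 + ∑ x ∈ J.erase i, v x ^ 2 :=
      Finset.sum_insert (by simp [hkJ])
    have e4 := Finset.add_sum_erase J (fun k => v k ^ 2) hi
    have hlt : ∑ x ∈ J'ᶜ, v x ^ 2 < ∑ x ∈ Jᶜ, v x ^ 2 := by linarith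
    have h2 : J' ∈ T := by
      simp only [T, S, Finset.mem_filter, Finset.mem_univ, true_and]
      exact ⟨by linarith, by omega⟩
    have := hJmin _ h2
    linarith

/-- Bound of the weight by the coordinates in `J`. -/
lemma weight_bound {d : ℕ} (v F : Fin d → ℝ) (B : ℝ) (hB : (d : ℝ) ≤ B) (hB0 : 0 < B)
    (hF0 : ∀ i, 0 ≤ F i) (hF1 : ∀ i, F i ≤ 1) (hF2 : ∀ i, F i * v i ^ 2 ≤ 1 / 4)
    (J : Finset (Fin d)) (hJ : J.Nonempty)
    (h2 : ∀ i ∈ J, B < ∑ k ∈ Jᶜ, v k ^ 2 + v i ^ 2)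
    (h3 : ∀ i ∈ J, ∀ k ∈ Jᶜ, v k ^ 2 ≤ v i ^ 2) :
    ∏ i, F i ≤ exp 1 * ∏ i ∈ J, 1 / (4 * (v i ^ 2 + (B - d) / J.card)) := by
  obtain ⟨i0, hi0, hmin⟩ := J.exists_min_image (fun i => v i ^ 2) hJ
  set M := v i0 ^ 2 with hM
  have hMpos : 0 < M := by
    rcases (sq_nonneg (v i0)).lt_or_eq with h | h
    · exact h
    · have h0 : ∑ k ∈ Jᶜ, v k ^ 2 ≤ 0 := Finset.sum_nonpos (fun k hk => by
        have := h3 i0 hi0 k hk; linarith)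
      have := h2 i0 hi0
      linarith
  have hcard : (0 : ℝ) < J.card := by exact_mod_cast hJ.card_pos
  set A := (B - d) / J.card with hA
  have hA0 : 0 ≤ A := div_nonneg (by linarith) hcard.le
  have hout : ∏ i ∈ Jᶜ, F i ≤ exp 1 * ∏ i ∈ J, exp (-A / v i ^ 2) := by
    have s1 : ∏ i ∈ Jᶜ, F i ≤ ∏ i ∈ Jᶜ, exp (-(v i ^ 2 - 1) / M) := by
      apply Finset.prod_le_prod (fun i _ => hF0 i)
      intro i hi
      by_cases h : v i ^ 2 ≤ 1
      · refine (hF1 i).trans (one_le_exp (div_nonneg (by linarith) hMpos.le))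
      · push Not at h
        have hiM := h3 i0 hi0 i hi
        have q1 : F i ≤ 1 / 4 := by nlinarith [hF0 i, hF2 i]
        have q2 : exp (-1) ≤ exp (-(v i ^ 2 - 1) / M) := by
          apply exp_le_exp.2
          rw [le_div_iff₀ hMpos]; linarith
        have q3 : (1 : ℝ) / 4 ≤ exp (-1) := by
          rw [exp_neg, one_div]
          apply inv_anti₀ (exp_pos _)
          linarith [exp_one_lt_d9]
        linarith
    refine s1.trans ?_
    rw [← exp_sum]
    have s2 : ∏ i ∈ J, exp (-A / M) ≤ ∏ i ∈ J, exp (-A / v i ^ 2) := by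
      apply Finset.prod_le_prod (fun i _ => (exp_pos _).le)
      intro i hi
      apply exp_le_exp.2
      rw [neg_div, neg_div, neg_le_neg_iff]
      exact div_le_div_of_nonneg_left hA0 hMpos (hmin i hi)
    refine le_trans ?_ (mul_le_mul_of_nonneg_left s2 (exp_pos 1).le)
    rw [Finset.prod_const, ← exp_nat_mul, ← exp_add]
    apply exp_le_exp.2
    rw [← Finset.sum_div, hA]
    have hc : (Jᶜ.card : ℝ) ≤ d := by
      have := Finset.card_le_univ Jᶜ
      simp only [Fintype.card_fin] at this
      exact_mod_cast this
    have e1 : ∑ i ∈ Jᶜ, -(v i ^ 2 - 1) = -(∑ i ∈ Jᶜ, v i ^ 2) + Jᶜ.card := by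
      simp [Finset.sum_sub_distrib]
      ring
    rw [e1]
    have e2 : 1 + (J.card : ℝ) * (-((B - d) / J.card) / M) = (M - (B - d)) / M := by
      field_simp
      ring
    rw [e2]
    apply div_le_div_of_nonneg_right _ hMpos.le
    have := h2 i0 hi0
    linarith
  have hin : (∏ i ∈ J, F i) * ∏ i ∈ J, exp (-A / v i ^ 2) ≤
      ∏ i ∈ J, 1 / (4 * (v i ^ 2 + A)) := by
    rw [← Finset.prod_mul_distrib]
    apply Finset.prod_le_prod (fun i _ => mul_nonneg (hF0 i) (exp_pos _).le)
    intro i hi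
    have hv : 0 < v i ^ 2 := hMpos.trans_le (hmin i hi)
    have hv' : v i ≠ 0 := fun h => by simp [h] at hv
    have q1 : F i ≤ 1 / (4 * v i ^ 2) := by
      rw [le_div_iff₀ (by positivity)]; linarith [hF2 i]
    have q2 : exp (-A / v i ^ 2) ≤ v i ^ 2 / (v i ^ 2 + A) := by
      rw [neg_div, exp_neg]
      have := add_one_le_exp (A / v i ^ 2)
      have e : v i ^ 2 / (v i ^ 2 + A) = (A / v i ^ 2 + 1)⁻¹ := by field_simp; ring
      rw [e]
      exact inv_anti₀ (by positivity) this
    calc F i * exp (-A / v i ^ 2) ≤ 1 / (4 * v i ^ 2) * (v i ^ 2 / (v i ^ 2 + A)) :=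
          mul_le_mul q1 q2 (exp_pos _).le (by positivity)
      _ = _ := by field_simp
  rw [← Finset.prod_mul_prod_compl J F]
  calc _ ≤ (∏ i ∈ J, F i) * (exp 1 * ∏ i ∈ J, exp (-A / v i ^ 2)) :=
        mul_le_mul_of_nonneg_left hout (Finset.prod_nonneg (fun i _ => hF0 i))
    _ = exp 1 * ((∏ i ∈ J, F i) * ∏ i ∈ J, exp (-A / v i ^ 2)) := by ring
    _ ≤ _ := mul_le_mul_of_nonneg_left hin (exp_pos 1).le

lemma series_bound (N : ℕ) :
    ∑ n ∈ Finset.range (N + 1), 1 / ((n : ℝ) ^ 2 / 2 + 1 / 9) ≤ 13 - 2 / ((N : ℝ) + 1 / 2) := by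
  induction N with
  | zero => norm_num
  | succ N ih =>
    rw [Finset.sum_range_succ]
    have : 1 / (((N + 1 : ℕ) : ℝ) ^ 2 / 2 + 1 / 9) ≤ 2 / ((N : ℝ) + 1 / 2) - 2 / (N + 1 + 1 / 2) := by
      have hN : (0 : ℝ) ≤ N := N.cast_nonneg
      rw [div_sub_div _ _ (by positivity) (by positivity), div_le_div_iff₀ (by positivity) (by positivity)]
      push_cast
      nlinarith
    push_cast at *
    linarith

/-- Sum over the points sharing one `J`. -/
lemma sum_J {d : ℕ} {κ : Type*} (S : Finset κ) (u : κ → Fin d → ℝ) (X : ℝ) (hX : 0 < X)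
    (J : Finset (Fin d)) (hJ : J.Nonempty)
    (hsep : ∀ a ∈ S, ∀ b ∈ S, a ≠ b → X / 2 ≤ ∑ i ∈ J, (u a i - u b i) ^ 2) (A : ℝ)
    (hA : X / (9 * J.card) ≤ A) :
    ∑ a ∈ S, ∏ i ∈ J, 1 / (4 * (u a i ^ 2 + A)) ≤ (13 / 2 * J.card / X) ^ J.card := by
  have hcard : (0 : ℝ) < J.card := by exact_mod_cast hJ.card_pos
  set j : ℝ := (J.card : ℝ) with hj
  set s := √(X / (2 * j)) with hs
  have hs0 : 0 < s := sqrt_pos.2 (by positivity)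
  have hs2 : s ^ 2 = X / (2 * j) := sq_sqrt (by positivity)
  let lab : κ → J → Bool × ℕ := fun a i => (decide (0 ≤ u a i), ⌊|u a i| / s⌋₊)
  obtain ⟨N, hN⟩ : ∃ N : ℕ, ∀ a ∈ S, ∀ i : J, (lab a i).2 < N + 1 := by
    refine ⟨S.sup (fun a => Finset.univ.sup (fun i : J => (lab a i).2)), fun a ha i => ?_⟩
    have h1 : (lab a i).2 ≤ Finset.univ.sup (fun i : J => (lab a i).2) :=
      Finset.le_sup (f := fun i : J => (lab a i).2) (Finset.mem_univ i)
    have h2 := Finset.le_sup (f := fun a => Finset.univ.sup (fun i : J => (lab a i).2)) ha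
    exact Nat.lt_succ_of_le (h1.trans h2)
  let K : Finset (Bool × ℕ) := Finset.univ ×ˢ Finset.range (N + 1)
  let G : Bool × ℕ → ℝ := fun p => j / (4 * X) * (1 / ((p.2 : ℝ) ^ 2 / 2 + 1 / 9))
  have hG0 : ∀ p, 0 ≤ G p := fun p => by positivity
  have hsum : ∑ p ∈ K, G p ≤ 13 / 2 * j / X := by
    simp only [K, G, Finset.sum_product, ← Finset.mul_sum]
    have h := series_bound N
    have h' : (0 : ℝ) ≤ 2 / ((N : ℝ) + 1 / 2) := by positivity
    have h2 : ∑ n ∈ Finset.range (N + 1), 1 / ((n : ℝ) ^ 2 / 2 + 1 / 9) ≤ 13 := by linarith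
    rw [Fintype.sum_bool]
    calc _ ≤ j / (4 * X) * (13 + 13) := by gcongr
      _ = _ := by field_simp; norm_num
  have hinj : Set.InjOn lab S := by
    intro a ha b hb hab
    by_contra hne
    have h := hsep a ha b hb hne
    have hlt : ∑ i ∈ J, (u a i - u b i) ^ 2 < ∑ i ∈ J, s ^ 2 := by
      apply Finset.sum_lt_sum_of_nonempty hJ
      intro i hi
      have hi' := congrFun hab ⟨i, hi⟩
      simp only [lab, Prod.mk.injEq, decide_eq_decide] at hi'
      obtain ⟨h1, h2⟩ := hi'
      have fa := Nat.floor_le (div_nonneg (abs_nonneg (u a i)) hs0.le)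
      have fb := Nat.floor_le (div_nonneg (abs_nonneg (u b i)) hs0.le)
      have ga := Nat.lt_floor_add_one (|u a i| / s)
      have gb := Nat.lt_floor_add_one (|u b i| / s)
      rw [h2] at fa ga
      generalize (⌊|u b i| / s⌋₊ : ℝ) = n at fa fb ga gb
      rw [le_div_iff₀ hs0] at fa fb
      rw [div_lt_iff₀ hs0] at ga gb
      apply sq_lt_sq.2
      rw [abs_of_pos hs0, abs_lt]
      by_cases hp : 0 ≤ u a i
      · have hq := h1.1 hp
        rw [abs_of_nonneg hp] at fa ga
        rw [abs_of_nonneg hq] at fb gb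
        constructor <;> nlinarith
      · have hq : ¬ 0 ≤ u b i := fun h => hp (h1.2 h)
        push Not at hp hq
        rw [abs_of_neg hp] at fa ga
        rw [abs_of_neg hq] at fb gb
        constructor <;> nlinarith
    rw [Finset.sum_const, nsmul_eq_mul, hs2] at hlt
    have : (J.card : ℝ) * (X / (2 * j)) = X / 2 := by rw [← hj]; field_simp
    linarith
  calc ∑ a ∈ S, ∏ i ∈ J, 1 / (4 * (u a i ^ 2 + A)) ≤ ∑ a ∈ S, ∏ i : J, G (lab a i) := by
        apply Finset.sum_le_sum
        intro a ha
        rw [← Finset.prod_coe_sort J]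
        apply Finset.prod_le_prod
        · intro i _
          have : 0 ≤ A := le_trans (by positivity) hA
          positivity
        · intro i _
          simp only [G, lab]
          have fa := Nat.floor_le (div_nonneg (abs_nonneg (u a i)) hs0.le)
          set n : ℝ := (⌊|u a i| / s⌋₊ : ℝ) with hn
          have hn0 : 0 ≤ n := Nat.cast_nonneg _
          rw [le_div_iff₀ hs0] at fa
          have h1 : n ^ 2 * s ^ 2 ≤ u a i ^ 2 := by
            rw [← mul_pow, ← sq_abs (u a i)]
            exact pow_le_pow_left₀ (by positivity) fa 2
          rw [hs2] at h1
          have e : j / (4 * X) * (1 / (n ^ 2 / 2 + 1 / 9)) =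
              1 / (4 * (n ^ 2 * (X / (2 * j)) + X / (9 * j))) := by
            field_simp
          rw [e]
          apply one_div_le_one_div_of_le
          · positivity
          · linarith
    _ = ∑ x ∈ S.image lab, ∏ i : J, G (x i) := by
        rw [Finset.sum_image hinj]
    _ ≤ ∑ x ∈ Fintype.piFinset (fun _ : J => K), ∏ i : J, G (x i) := by
        apply Finset.sum_le_sum_of_subset_of_nonneg
        · intro x hx
          obtain ⟨a, ha, rfl⟩ := Finset.mem_image.1 hx
          rw [Fintype.mem_piFinset]
          intro i
          simp only [K, Finset.mem_product, Finset.mem_univ, true_and, Finset.mem_range]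
          exact hN a ha i
        · intro x _ _
          exact Finset.prod_nonneg (fun i _ => hG0 _)
    _ = (∑ p ∈ K, G p) ^ J.card := by
        rw [← Finset.prod_univ_sum]; simp
    _ ≤ _ := pow_le_pow_left₀ (Finset.sum_nonneg (fun p _ => hG0 p)) hsum _

lemma core {d : ℕ} (hd : 1 ≤ d) {κ : Type*} (S : Finset κ) (u F : κ → Fin d → ℝ) (X : ℝ)
    (hX : 150 * (d : ℝ) ≤ X)
    (hF0 : ∀ a i, 0 ≤ F a i) (hF1 : ∀ a i, F a i ≤ 1)
    (hF2 : ∀ a i, F a i * u a i ^ 2 ≤ 1 / 4)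
    (hsep : ∀ a ∈ S, ∀ b ∈ S, a ≠ b → X ≤ ∑ i, (u a i - u b i) ^ 2)
    (hfar : ∀ a ∈ S, X / 4 ≤ ∑ i, u a i ^ 2) :
    ∑ a ∈ S, ∏ i, F a i ≤ 100 * d / X := by
  have hd' : (1 : ℝ) ≤ d := by exact_mod_cast hd
  have hX0 : 0 < X := by linarith
  choose Jf hJ1 hJ2 hJ3 using fun a => exists_split (u a) (X / 8) (by positivity)
  have hne : ∀ a ∈ S, (Jf a).Nonempty := by
    intro a ha
    rw [Finset.nonempty_iff_ne_empty]
    intro h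
    have h1 := hJ1 a
    rw [h, Finset.compl_empty] at h1
    have := hfar a ha
    linarith
  have hJ : ∀ J : Finset (Fin d), ∑ a ∈ S with Jf a = J, ∏ i, F a i ≤
      if J.card = 0 then 0 else exp 1 * (13 / 2 * J.card / X) ^ J.card := by
    intro J
    by_cases hJe : J.card = 0
    · rw [if_pos hJe]
      apply le_of_eq
      apply Finset.sum_eq_zero
      intro a ha
      obtain ⟨haS, rfl⟩ := Finset.mem_filter.1 ha
      have := (hne a haS).card_pos
      omega
    · rw [if_neg hJe]
      have hJn : J.Nonempty := Finset.card_pos.1 (by omega)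
      have hcard : (0 : ℝ) < J.card := by exact_mod_cast hJn.card_pos
      have hm : ∑ a ∈ S with Jf a = J, ∏ i, F a i ≤ ∑ a ∈ S with Jf a = J,
          exp 1 * ∏ i ∈ J, 1 / (4 * (u a i ^ 2 + (X / 8 - d) / J.card)) := by
        apply Finset.sum_le_sum
        intro a ha
        obtain ⟨haS, rfl⟩ := Finset.mem_filter.1 ha
        exact weight_bound (u a) (F a) (X / 8) (by linarith) (by linarith) (hF0 a) (hF1 a)
          (hF2 a) _ (hne a haS) (hJ2 a) (hJ3 a)
      refine hm.trans ?_
      rw [← Finset.mul_sum]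
      apply mul_le_mul_of_nonneg_left _ (exp_pos 1).le
      apply sum_J _ u X hX0 J hJn
      · intro a ha b hb hab
        obtain ⟨ha, haJ⟩ := Finset.mem_filter.1 ha
        obtain ⟨hb, hbJ⟩ := Finset.mem_filter.1 hb
        have h1 := hJ1 a
        have h2 := hJ1 b
        rw [haJ] at h1
        rw [hbJ] at h2
        have h3 : ∑ i ∈ Jᶜ, (u a i - u b i) ^ 2 ≤
            ∑ i ∈ Jᶜ, (2 * u a i ^ 2 + 2 * u b i ^ 2) := by
          apply Finset.sum_le_sum
          intro i _
          nlinarith [sq_nonneg (u a i + u b i)]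
        rw [Finset.sum_add_distrib, ← Finset.mul_sum, ← Finset.mul_sum] at h3
        have h4 := hsep a ha b hb hab
        rw [← Finset.sum_compl_add_sum J] at h4
        linarith
      · rw [← div_div]
        apply div_le_div_of_nonneg_right _ hcard.le
        linarith
  rw [← Finset.sum_fiberwise_of_maps_to (s := S) (t := (Finset.univ : Finset (Fin d)).powerset)
    (g := Jf) (fun a _ => by simp)]
  refine (Finset.sum_le_sum (fun J _ => hJ J)).trans ?_
  rw [Finset.sum_powerset_apply_card
    (fun c => if c = 0 then (0 : ℝ) else exp 1 * (13 / 2 * c / X) ^ c)]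
  simp only [Finset.card_univ, Fintype.card_fin]
  rw [Finset.sum_range_succ']
  simp only [if_true, smul_zero, add_zero]
  set q := 13 / 2 * d * exp 1 / X with hq
  have he := exp_one_lt_d9
  have he0 := exp_pos 1
  have hq0 : 0 ≤ q := by positivity
  have hq1 : q ≤ 1 / 5 := by
    rw [hq, div_le_iff₀ hX0]; nlinarith
  have hterm : ∀ c ∈ Finset.range d, (d.choose (c + 1)) •
      (if c + 1 = 0 then (0 : ℝ) else exp 1 * (13 / 2 * ((c + 1 : ℕ) : ℝ) / X) ^ (c + 1)) ≤
      exp 1 * q * q ^ c := by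
    intro c _
    rw [if_neg (by omega), nsmul_eq_mul]
    set k := c + 1 with hk
    have b1 : ((d.choose k : ℕ) : ℝ) ≤ (d : ℝ) ^ k / (k.factorial : ℝ) := Nat.choose_le_pow_div k d
    have b2 : (k : ℝ) ^ k / (k.factorial : ℝ) ≤ exp k := pow_div_factorial_le_exp _ (by positivity) k
    calc _ ≤ (d : ℝ) ^ k / (k.factorial : ℝ) * (exp 1 * (13 / 2 * (k : ℝ) / X) ^ k) := by gcongr
      _ = exp 1 * (13 / 2 * d / X) ^ k * ((k : ℝ) ^ k / (k.factorial : ℝ)) := by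
        simp only [mul_pow, div_pow]; ring
      _ ≤ exp 1 * (13 / 2 * d / X) ^ k * exp k := by gcongr
      _ = exp 1 * q ^ k := by
        have : exp (k : ℝ) = exp 1 ^ k := by rw [← exp_nat_mul, mul_one]
        rw [this, mul_assoc, ← mul_pow, hq]; ring
      _ = _ := by rw [hk]; ring
  refine (Finset.sum_le_sum hterm).trans ?_
  rw [← Finset.mul_sum]
  have hgeo : ∑ c ∈ Finset.range d, q ^ c ≤ 5 / 4 := by
    have := geom_sum_mul_neg q d
    have hp : 0 ≤ q ^ d := by positivity
    have hs : 0 ≤ ∑ c ∈ Finset.range d, q ^ c := Finset.sum_nonneg (fun _ _ => by positivity)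
    nlinarith
  calc exp 1 * q * ∑ c ∈ Finset.range d, q ^ c ≤ exp 1 * q * (5 / 4) := by gcongr
    _ = (65 / 8 * (exp 1 * exp 1)) * d / X := by rw [hq]; ring
    _ ≤ 100 * d / X := by
      gcongr
      nlinarith
/-- derivative of the one-dimensional kernel -/
def dirKerD (m : ℕ) (t : ℝ) : ℝ :=
  (2 * m + 1 : ℝ)⁻¹ * ∑ k ∈ Finset.Icc (-(m : ℤ)) (m : ℤ),
    (-Real.sin (2 * Real.pi * k * t) * (2 * Real.pi * k))

lemma hasDerivAt_sum (m : ℕ) (t : ℝ) :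
    HasDerivAt (fun t => ∑ k ∈ Finset.Icc (-(m : ℤ)) (m : ℤ), Real.cos (2 * Real.pi * k * t))
      (∑ k ∈ Finset.Icc (-(m : ℤ)) (m : ℤ), (-Real.sin (2 * Real.pi * k * t) * (2 * Real.pi * k))) t := by
  apply HasDerivAt.fun_sum
  intro k _
  have h : HasDerivAt (fun t : ℝ => 2 * Real.pi * k * t) (2 * Real.pi * k) t := by
    simpa using (hasDerivAt_id t).const_mul (2 * Real.pi * (k : ℝ))
  exact h.cos

lemma hasDerivAt_dirKer (m : ℕ) (t : ℝ) : HasDerivAt (dirKer m) (dirKerD m t) t :=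
  (hasDerivAt_sum m t).const_mul _

lemma card_Icc_m (m : ℕ) : ((Finset.Icc (-(m : ℤ)) (m : ℤ)).card : ℝ) = 2 * m + 1 := by
  rw [Int.card_Icc]
  have : ((m : ℤ) + 1 - -(m : ℤ)).toNat = 2 * m + 1 := by omega
  rw [this]; push_cast; ring

lemma abs_sum_cos_le (m : ℕ) (t : ℝ) :
    |∑ k ∈ Finset.Icc (-(m : ℤ)) (m : ℤ), Real.cos (2 * Real.pi * k * t)| ≤ 2 * m + 1 := by
  refine (Finset.abs_sum_le_sum_abs _ _).trans ?_
  refine (Finset.sum_le_sum (fun k _ => abs_cos_le_one _)).trans ?_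
  rw [Finset.sum_const, nsmul_eq_mul, card_Icc_m, mul_one]

lemma abs_dirKer_le (m : ℕ) (t : ℝ) : |dirKer m t| ≤ 1 := by
  unfold dirKer
  rw [abs_mul, abs_of_pos (by positivity : (0 : ℝ) < (2 * m + 1 : ℝ)⁻¹), inv_mul_le_iff₀ (by positivity)]
  simpa using abs_sum_cos_le m t

lemma abs_dirKerD_le (m : ℕ) (t : ℝ) : |dirKerD m t| ≤ 2 * Real.pi * m := by
  unfold dirKerD
  rw [abs_mul, abs_of_pos (by positivity : (0 : ℝ) < (2 * m + 1 : ℝ)⁻¹), inv_mul_le_iff₀ (by positivity)]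
  refine (Finset.abs_sum_le_sum_abs _ _).trans ?_
  have : ∀ k ∈ Finset.Icc (-(m : ℤ)) (m : ℤ),
      |-Real.sin (2 * Real.pi * k * t) * (2 * Real.pi * k)| ≤ 2 * Real.pi * m := by
    intro k hk
    obtain ⟨h1, h2⟩ := Finset.mem_Icc.1 hk
    have hk' : |(k : ℝ)| ≤ m := by
      rw [abs_le]; exact ⟨by exact_mod_cast h1, by exact_mod_cast h2⟩
    rw [abs_mul, abs_neg, abs_mul, abs_of_pos (by positivity : 0 < 2 * Real.pi)]
    calc _ ≤ 1 * (2 * Real.pi * (m : ℝ)) := by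
          gcongr
          exact abs_sin_le_one _
      _ = _ := one_mul _
  refine (Finset.sum_le_sum this).trans ?_
  rw [Finset.sum_const, nsmul_eq_mul, card_Icc_m]

lemma sin_mul_sum (m : ℕ) (t : ℝ) :
    Real.sin (Real.pi * t) * ∑ k ∈ Finset.Icc (-(m : ℤ)) (m : ℤ), Real.cos (2 * Real.pi * k * t)
      = Real.sin ((2 * m + 1) * Real.pi * t) := by
  induction m with
  | zero => simp
  | succ m ih =>
    have hI : Finset.Icc (-((m + 1 : ℕ) : ℤ)) ((m + 1 : ℕ) : ℤ) =
        insert (-((m : ℤ) + 1)) (insert ((m : ℤ) + 1) (Finset.Icc (-(m : ℤ)) (m : ℤ))) := by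
      ext x; simp only [Finset.mem_Icc, Finset.mem_insert]; push_cast; omega
    rw [hI, Finset.sum_insert (by simp; omega), Finset.sum_insert (by simp), mul_add, mul_add, ih]
    have e1 : 2 * Real.pi * ((-((m : ℤ) + 1) : ℤ) : ℝ) * t = -(2 * Real.pi * ((m : ℝ) + 1) * t) := by
      push_cast; ring
    have e2 : (2 * (m : ℝ) + 1) * Real.pi * t = 2 * Real.pi * ((m : ℝ) + 1) * t - Real.pi * t := by ring
    have e3 : (2 * ((m + 1 : ℕ) : ℝ) + 1) * Real.pi * t = 2 * Real.pi * ((m : ℝ) + 1) * t + Real.pi * t := by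
      push_cast; ring
    rw [e1, e2, e3, Real.cos_neg, Real.sin_add, Real.sin_sub]
    push_cast
    ring

lemma two_abs_le_sin {t : ℝ} (ht : |t| ≤ 1 / 2) : 2 * |t| ≤ |Real.sin (Real.pi * t)| := by
  have h := Real.mul_abs_le_abs_sin (x := Real.pi * t) (by
    rw [abs_mul, abs_of_pos Real.pi_pos]; nlinarith [Real.pi_pos])
  rw [abs_mul, abs_of_pos Real.pi_pos] at h
  have : 2 / Real.pi * (Real.pi * |t|) = 2 * |t| := by field_simp
  linarith

lemma dirKer_decay (m : ℕ) {t : ℝ} (ht : |t| ≤ 1 / 2) : |dirKer m t| * (m * |t|) ≤ 1 / 2 := by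
  have h1 := two_abs_le_sin ht
  have h2 : |Real.sin (Real.pi * t)| * |dirKer m t| ≤ (2 * m + 1 : ℝ)⁻¹ := by
    rw [← abs_mul]
    have : Real.sin (Real.pi * t) * dirKer m t =
        (2 * m + 1 : ℝ)⁻¹ * Real.sin ((2 * m + 1) * Real.pi * t) := by
      rw [← sin_mul_sum]; unfold dirKer; ring
    rw [this, abs_mul, abs_of_pos (by positivity : (0 : ℝ) < (2 * m + 1 : ℝ)⁻¹)]
    exact mul_le_of_le_one_right (by positivity) (abs_sin_le_one _)
  have h3 : 2 * |t| * |dirKer m t| ≤ (2 * m + 1 : ℝ)⁻¹ :=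
    (mul_le_mul_of_nonneg_right h1 (abs_nonneg _)).trans h2
  have h4 : (2 * m + 1 : ℝ)⁻¹ * m ≤ 1 := by
    rw [inv_mul_le_iff₀ (by positivity)]; linarith [(m.cast_nonneg : (0 : ℝ) ≤ m)]
  nlinarith [mul_le_mul_of_nonneg_right h3 (m.cast_nonneg : (0 : ℝ) ≤ m)]

lemma dirKerD_decay (m : ℕ) {t : ℝ} (ht : |t| ≤ 1 / 2) : |dirKerD m t| * |t| ≤ Real.pi := by
  have h1 := two_abs_le_sin ht
  have hp := Real.pi_pos
  have hs : HasDerivAt (fun t : ℝ => Real.sin (Real.pi * t)) (Real.cos (Real.pi * t) * Real.pi) t := by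
    have h : HasDerivAt (fun t : ℝ => Real.pi * t) Real.pi t := by
      simpa using (hasDerivAt_id t).const_mul Real.pi
    exact h.sin
  have hs' : HasDerivAt (fun t : ℝ => Real.sin ((2 * m + 1) * Real.pi * t))
      (Real.cos ((2 * m + 1) * Real.pi * t) * ((2 * m + 1) * Real.pi)) t := by
    have h : HasDerivAt (fun t : ℝ => (2 * m + 1) * Real.pi * t) ((2 * m + 1) * Real.pi) t := by
      simpa using (hasDerivAt_id t).const_mul ((2 * m + 1) * Real.pi)
    exact h.sin
  have hmul := hs.fun_mul (hasDerivAt_sum m t)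
  have hfe : (fun t : ℝ => Real.sin (Real.pi * t) *
      ∑ k ∈ Finset.Icc (-(m : ℤ)) (m : ℤ), Real.cos (2 * Real.pi * k * t)) =
      fun t => Real.sin ((2 * m + 1) * Real.pi * t) := funext (sin_mul_sum m)
  rw [hfe] at hmul
  have he := hmul.unique hs'
  set P := ∑ k ∈ Finset.Icc (-(m : ℤ)) (m : ℤ), Real.cos (2 * Real.pi * k * t) with hP
  have hPle : |P| ≤ 2 * m + 1 := abs_sum_cos_le m t
  have hD : dirKerD m t = (2 * m + 1 : ℝ)⁻¹ * ∑ k ∈ Finset.Icc (-(m : ℤ)) (m : ℤ),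
    (-Real.sin (2 * Real.pi * k * t) * (2 * Real.pi * k)) := rfl
  set Q := ∑ k ∈ Finset.Icc (-(m : ℤ)) (m : ℤ),
    (-Real.sin (2 * Real.pi * k * t) * (2 * Real.pi * k)) with hQ
  have hq : |Real.sin (Real.pi * t)| * |Q| ≤ 2 * Real.pi * (2 * m + 1) := by
    rw [← abs_mul]
    have : Real.sin (Real.pi * t) * Q = Real.cos ((2 * m + 1) * Real.pi * t) * ((2 * m + 1) * Real.pi)
      - Real.cos (Real.pi * t) * Real.pi * P := by linarith
    rw [this]
    refine (abs_sub _ _).trans ?_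
    rw [abs_mul, abs_mul, abs_mul, abs_mul, abs_of_pos hp,
      abs_of_pos (by positivity : 0 < (2 * (m : ℝ) + 1))]
    have c1 := abs_cos_le_one ((2 * m + 1) * Real.pi * t)
    have c2 := abs_cos_le_one (Real.pi * t)
    calc _ ≤ 1 * ((2 * (m : ℝ) + 1) * Real.pi) + 1 * Real.pi * (2 * m + 1) := by gcongr
      _ = _ := by ring
  have h3 : 2 * |t| * |Q| ≤ 2 * Real.pi * (2 * m + 1) :=
    (mul_le_mul_of_nonneg_right h1 (abs_nonneg _)).trans hq
  rw [hD, abs_mul, abs_of_pos (by positivity : (0 : ℝ) < (2 * m + 1 : ℝ)⁻¹), mul_assoc,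
    inv_mul_le_iff₀ (by positivity)]
  linarith

lemma dirKer_periodic (m : ℕ) (t : ℝ) (n : ℤ) : dirKer m (t - n) = dirKer m t := by
  unfold dirKer
  congr 1
  apply Finset.sum_congr rfl
  intro k _
  have : 2 * Real.pi * (k : ℝ) * (t - n) = 2 * Real.pi * k * t - ((k * n : ℤ) : ℝ) * (2 * Real.pi) := by
    push_cast; ring
  rw [this, Real.cos_sub_int_mul_two_pi]

lemma dirKerD_periodic (m : ℕ) (t : ℝ) (n : ℤ) : dirKerD m (t - n) = dirKerD m t := by
  unfold dirKerD
  congr 1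
  apply Finset.sum_congr rfl
  intro k _
  have : 2 * Real.pi * (k : ℝ) * (t - n) = 2 * Real.pi * k * t - ((k * n : ℤ) : ℝ) * (2 * Real.pi) := by
    push_cast; ring
  rw [this, Real.sin_sub_int_mul_two_pi]

lemma gradient_coord (d m : ℕ) (x : EuclideanSpace ℝ (Fin d)) (i : Fin d) :
    gradient (sqDirKer d m) x i =
      dirKerD m (x i) * ∏ j ∈ Finset.univ.erase i, dirKer m (x j) := by
  have h1 : ∀ j ∈ (Finset.univ : Finset (Fin d)),
      HasFDerivAt (fun x : EuclideanSpace ℝ (Fin d) => dirKer m (x j))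
      (dirKerD m (x j) • (EuclideanSpace.proj j : EuclideanSpace ℝ (Fin d) →L[ℝ] ℝ)) x := by
    intro j _
    have hp : HasFDerivAt (fun x : EuclideanSpace ℝ (Fin d) => x j)
      (EuclideanSpace.proj j : EuclideanSpace ℝ (Fin d) →L[ℝ] ℝ) x :=
      (EuclideanSpace.proj j : EuclideanSpace ℝ (Fin d) →L[ℝ] ℝ).hasFDerivAt
    exact HasDerivAt.comp_hasFDerivAt (h₂ := dirKer m) (f := fun x : EuclideanSpace ℝ (Fin d) => x j) x
      (hasDerivAt_dirKer m (x j)) hp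
  have h2 := HasFDerivAt.finsetProd h1
  have h3 : fderiv ℝ (sqDirKer d m) x = _ := HasFDerivAt.fderiv (f := sqDirKer d m) h2
  have h4 : gradient (sqDirKer d m) x i = fderiv ℝ (sqDirKer d m) x (EuclideanSpace.single i 1) := by
    unfold gradient
    rw [← InnerProductSpace.toDual_symm_apply]
    rw [EuclideanSpace.inner_single_right]
    simp
  rw [h4, h3]
  simp only [sum_apply, smul_apply, PiLp.proj_apply,
    smul_eq_mul]
  rw [Finset.sum_eq_single i]
  · simp; ring
  · intro j _ hj
    simp [hj]
  · simp

lemma torusDist_le {d : ℕ} (x y z : EuclideanSpace ℝ (Fin d)) (n : Fin d → ℤ)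
    (h : ∀ i, z i = x i - y i + n i) : torusDist x y ≤ ‖z‖ := by
  unfold torusDist
  have hz : z = x - y + ∑ i, ((n i : ℝ)) • EuclideanSpace.single i (1 : ℝ) := by
    ext j
    simp [h, Finset.sum_apply, Pi.single_apply]
  rw [hz]
  exact ciInf_le ⟨0, by rintro _ ⟨n, rfl⟩; exact norm_nonneg _⟩ n


lemma kernel_sum (d : ℕ) (hd : 2 ≤ d) (m : ℕ) (hm : 1 ≤ m) (s : ℕ)
    (β : ℝ) (hβ : 4 * Real.pi * Real.sqrt d ≤ β)
    (θ : Fin s → EuclideanSpace ℝ (Fin d)) (Δ : ℝ)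
    (hΔsep : ∀ j k, j ≠ k → Δ ≤ torusDist (θ j) (θ k))
    (hΔβ : β / m ≤ Δ)
    (ω : EuclideanSpace ℝ (Fin d)) (F : Fin s → Fin d → ℝ)
    (hF0 : ∀ a i, 0 ≤ F a i) (hF1 : ∀ a i, F a i ≤ 1)
    (hF2 : ∀ a i, F a i * (m * ((ω - θ a) i - round ((ω - θ a) i))) ^ 2 ≤ 1 / 4) :
    ∑ ℓ ∈ Finset.univ.filter (fun ℓ => Δ / 2 ≤ torusDist ω (θ ℓ)), ∏ i, F ℓ i
      ≤ 16 * Real.pi ^ 2 * (d : ℝ) ^ 2 / β ^ 2 := by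
  have hd' : (2 : ℝ) ≤ d := by exact_mod_cast hd
  have hm' : (1 : ℝ) ≤ m := by exact_mod_cast hm
  have hpi := Real.pi_gt_d2
  have hpi2 : 150 ≤ 16 * Real.pi ^ 2 := by nlinarith
  have hβ0 : 0 < β := lt_of_lt_of_le (by positivity) hβ
  have hX1 : 16 * Real.pi ^ 2 * d ≤ β ^ 2 := by
    have := pow_le_pow_left₀ (by positivity) hβ 2
    rw [mul_pow, Real.sq_sqrt (by positivity)] at this
    linarith
  have hX : 150 * (d : ℝ) ≤ β ^ 2 := by nlinarith
  have hmΔ : β ≤ m * Δ := by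
    rw [div_le_iff₀ (by positivity)] at hΔβ; linarith
  let v : Fin s → EuclideanSpace ℝ (Fin d) := fun a =>
    WithLp.toLp 2 (fun i => (ω - θ a) i - round ((ω - θ a) i))
  have key := core (d := d) (by omega)
    (Finset.univ.filter (fun ℓ => Δ / 2 ≤ torusDist ω (θ ℓ)))
    (fun a i => m * ((ω - θ a) i - round ((ω - θ a) i))) F (β ^ 2) hX hF0 hF1 hF2 ?_ ?_
  · refine key.trans ?_
    gcongr
    · linarith
    · nlinarith
  · intro a _ b _ hab
    have h1 : torusDist (θ a) (θ b) ≤ ‖v b - v a‖ := by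
      apply torusDist_le _ _ _ (fun i => round ((ω - θ a) i) - round ((ω - θ b) i))
      intro i
      simp [v]
      ring
    have h2 := (hΔsep a b hab).trans h1
    have h3 : β ≤ m * ‖v b - v a‖ := hmΔ.trans (by gcongr)
    have h4 := pow_le_pow_left₀ hβ0.le h3 2
    rw [mul_pow, EuclideanSpace.real_norm_sq_eq, Finset.mul_sum] at h4
    refine h4.trans (le_of_eq (Finset.sum_congr rfl fun i _ => ?_))
    simp [v]
    ring
  · intro a ha
    have h1 : torusDist ω (θ a) ≤ ‖v a‖ := by
      apply torusDist_le _ _ _ (fun i => - round ((ω - θ a) i))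
      intro i
      simp [v]
      ring
    have h2 := (Finset.mem_filter.1 ha).2.trans h1
    have h3 : β / 2 ≤ m * ‖v a‖ := by
      have : (m : ℝ) * (Δ / 2) ≤ m * ‖v a‖ := by gcongr
      linarith
    have h4 := pow_le_pow_left₀ (by positivity) h3 2
    rw [mul_pow, EuclideanSpace.real_norm_sq_eq, Finset.mul_sum] at h4
    have e : β ^ 2 / 4 = (β / 2) ^ 2 := by ring
    rw [e]
    refine h4.trans (le_of_eq (Finset.sum_congr rfl fun i _ => ?_))
    simp [v]
    ring

lemma F_ker_le (m : ℕ) (t : ℝ) : dirKer m t ^ 2 ≤ 1 := by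
  rw [← sq_abs]; exact pow_le_one₀ (abs_nonneg _) (abs_dirKer_le m t)

lemma F_ker_decay (m : ℕ) (t : ℝ) : dirKer m t ^ 2 * (m * (t - round t)) ^ 2 ≤ 1 / 4 := by
  rw [← dirKer_periodic m t (round t), ← mul_pow, ← sq_abs, abs_mul, abs_mul, Nat.abs_cast]
  have := pow_le_pow_left₀ (by positivity) (dirKer_decay m (abs_sub_round t)) 2
  linarith

lemma F_kerD_le (m : ℕ) (hm : 1 ≤ m) (t : ℝ) : (dirKerD m t / (2 * Real.pi * m)) ^ 2 ≤ 1 := by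
  have hm' : (1 : ℝ) ≤ m := by exact_mod_cast hm
  have hp := Real.pi_pos
  have h0 : 0 < 2 * Real.pi * m := by positivity
  rw [← sq_abs, abs_div, abs_of_pos h0]
  exact pow_le_one₀ (by positivity) ((div_le_one h0).2 (abs_dirKerD_le m t))

lemma F_kerD_decay (m : ℕ) (hm : 1 ≤ m) (t : ℝ) :
    (dirKerD m t / (2 * Real.pi * m)) ^ 2 * (m * (t - round t)) ^ 2 ≤ 1 / 4 := by
  have hm' : (1 : ℝ) ≤ m := by exact_mod_cast hm
  have hp := Real.pi_pos
  have h0 : 0 < 2 * Real.pi * m := by positivity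
  rw [← dirKerD_periodic m t (round t)]
  have h := dirKerD_decay m (abs_sub_round t)
  set z := t - round t
  have e : dirKerD m z / (2 * Real.pi * m) * (m * z) = (dirKerD m z * z) / (2 * Real.pi) := by
    field_simp
  rw [← mul_pow, e, ← sq_abs, abs_div, abs_mul, abs_of_pos (by positivity : 0 < 2 * Real.pi)]
  have h2 : |dirKerD m z| * |z| / (2 * Real.pi) ≤ 1 / 2 := by
    rw [div_le_iff₀ (by positivity)]; linarith
  have := pow_le_pow_left₀ (by positivity) h2 2
  linarith

/-- **Energy bounds for well-separated points on the torus.**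
If `d ≥ 2`, `β ≥ 4π√d` and `θ_1, …, θ_s ∈ 𝕋^d` have minimum separation
`Δ ≥ β/m`, then for every `ω ∈ 𝕋^d`:
`∑_{ℓ : |ω-θ_ℓ| ≥ Δ/2} |D_m(ω-θ_ℓ)|² ≤ 16π²d²/β²` and
`∑_{ℓ : |ω-θ_ℓ| ≥ Δ/2} |∇D_m(ω-θ_ℓ)|² ≤ 64π⁴d³m²/β²`. -/
theorem stmt9 (d : ℕ) (hd : 2 ≤ d) (m : ℕ) (hm : 1 ≤ m) (s : ℕ) (hs : 1 ≤ s)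
    (β : ℝ) (hβ : 4 * Real.pi * Real.sqrt d ≤ β)
    (θ : Fin s → EuclideanSpace ℝ (Fin d)) (Δ : ℝ)
    (hΔsep : ∀ j k, j ≠ k → Δ ≤ torusDist (θ j) (θ k))
    (hΔβ : β / m ≤ Δ)
    (ω : EuclideanSpace ℝ (Fin d)) :
    (∑ ℓ ∈ Finset.univ.filter (fun ℓ => Δ / 2 ≤ torusDist ω (θ ℓ)),
        sqDirKer d m (ω - θ ℓ) ^ 2 ≤ 16 * Real.pi ^ 2 * (d : ℝ) ^ 2 / β ^ 2) ∧
    (∑ ℓ ∈ Finset.univ.filter (fun ℓ => Δ / 2 ≤ torusDist ω (θ ℓ)),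
        ‖gradient (sqDirKer d m) (ω - θ ℓ)‖ ^ 2
          ≤ 64 * Real.pi ^ 4 * (d : ℝ) ^ 3 * (m : ℝ) ^ 2 / β ^ 2) := by
  constructor
  · have := kernel_sum d hd m hm s β hβ θ Δ hΔsep hΔβ ω (fun a i => dirKer m ((ω - θ a) i) ^ 2)
      (fun a i => sq_nonneg _) (fun a i => F_ker_le m _) (fun a i => F_ker_decay m _)
    simpa only [sqDirKer, Finset.prod_pow] using this
  · have hm' : (1 : ℝ) ≤ m := by exact_mod_cast hm
    have hp := Real.pi_pos
    have h0 : 0 < 2 * Real.pi * m := by positivity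
    have h1 : ∀ i0 : Fin d, ∑ ℓ ∈ Finset.univ.filter (fun ℓ => Δ / 2 ≤ torusDist ω (θ ℓ)),
        (gradient (sqDirKer d m) (ω - θ ℓ) i0) ^ 2 ≤
        (2 * Real.pi * m) ^ 2 * (16 * Real.pi ^ 2 * (d : ℝ) ^ 2 / β ^ 2) := by
      intro i0
      have := kernel_sum d hd m hm s β hβ θ Δ hΔsep hΔβ ω
        (fun a i => if i = i0 then (dirKerD m ((ω - θ a) i) / (2 * Real.pi * m)) ^ 2
          else dirKer m ((ω - θ a) i) ^ 2)
        (fun a i => by split_ifs <;> positivity)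
        (fun a i => by
          split_ifs
          · exact F_kerD_le m hm _
          · exact F_ker_le m _)
        (fun a i => by
          split_ifs
          · exact F_kerD_decay m hm _
          · exact F_ker_decay m _)
      refine le_trans (le_of_eq ?_) (mul_le_mul_of_nonneg_left this (sq_nonneg (2 * Real.pi * m)))
      rw [Finset.mul_sum]
      apply Finset.sum_congr rfl
      intro a _
      rw [gradient_coord, ← Finset.mul_prod_erase Finset.univ _ (Finset.mem_univ i0), if_pos rfl]
      have e : ∏ i ∈ Finset.univ.erase i0,
          (if i = i0 then (dirKerD m ((ω - θ a) i) / (2 * Real.pi * m)) ^ 2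
          else dirKer m ((ω - θ a) i) ^ 2) =
          ∏ i ∈ Finset.univ.erase i0, dirKer m ((ω - θ a) i) ^ 2 :=
        Finset.prod_congr rfl (fun i hi => if_neg (Finset.ne_of_mem_erase hi))
      rw [e, Finset.prod_pow]
      field_simp
    simp only [EuclideanSpace.real_norm_sq_eq]
    rw [Finset.sum_comm]
    refine (Finset.sum_le_sum (fun i _ => h1 i)).trans (le_of_eq ?_)
    rw [Finset.sum_const, nsmul_eq_mul, Finset.card_univ, Fintype.card_fin]
    ring

end
end
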